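/- arXiv:2203.13163 — 5 statements merged into one kernel-verified Lean document; each statement's English description precedes it below -/
import Mathlib

section
/- Let (x_n)_{n∈ℤ} be pairwise distinct points of ℝ³ with x_0 ≠ 0. Set δ_0 = |x_0| and, for p ≥ 1, δ_p = min{|x_j − x_k| : −p ≤ j, k ≤ p, j ≠ k}. Let b : ℤ × ℤ → ℂ be Hermitian (b_{mn} = conj(b_{nm})) and satisfy Σ_{n,m∈ℤ} |b_{nm}| < ∞ and Σ_{n,m∈ℤ} |b_{nm}|/δ_{|m|} < ∞. Put C⁰(m) = (1/4π)·Σ_{j∈ℤ} |b_{mj}| and C¹(m) = (1/4π)·Σ_{j∈ℤ} |b_{mj}|/δ_{|j|}. Then for every ζ ∈ ℂ with Im ζ ≥ 0 and all n, m ∈ ℤ, the double series u_{nm} = Σ_{n'∈ℤ} Σ_{m'∈ℤ, m'≠n'} b_{nn'} · g(ζ; x_{n'} − x_{m'}) · b_{m'm} converges absolutely, |u_{nm}| ≤ 4π·[C¹(n)·C⁰(m) + C⁰(n)·C¹(m)], and Σ_{n,m∈ℤ} |u_{nm}|² < ∞; in particular the matrix (u_{nm}) defines a Hilbert–Schmidt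 operator on ℓ²(ℤ). -/
open MeasureTheory Complex Real

/-- The Green kernel `g(ζ; v) = e^{iζ|v|}/(4π|v|)` for a vector `v ∈ ℝ³`. -/
noncomputable def greenK (ζ : ℂ) (v : EuclideanSpace ℝ (Fin 3)) : ℂ :=
  Complex.exp (Complex.I * ζ * (‖v‖ : ℝ)) / ((4 * Real.pi * ‖v‖ : ℝ) : ℂ)

/-- The matrix entry `u_{nm} = Σ_{n'} Σ_{m' ≠ n'} b_{nn'} g(ζ; x_{n'} - x_{m'}) b_{m'm}`
(as a sum over pairs `p = (n', m')` with the diagonal `m' = n'` excluded). -/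
noncomputable def uMat (ζ : ℂ) (x : ℤ → EuclideanSpace ℝ (Fin 3)) (b : ℤ → ℤ → ℂ)
    (n m : ℤ) : ℂ :=
  ∑' p : ℤ × ℤ, if p.2 = p.1 then 0 else b n p.1 * greenK ζ (x p.1 - x p.2) * b p.2 m

/-!
For `Im ζ ≥ 0` the exponential factor has modulus at most one, so `|g(ζ; v)| ≤ 1/(4π|v|)`, and
`|x_j - x_k| ≥ δ_{max(|j|,|k|)}` gives `|g(ζ; x_j - x_k)| ≤ 1/(4πδ_{|j|}) + 1/(4πδ_{|k|})`. The
sum of a function of `j` and a function of `k` decouples the double series into products of row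
and column sums of `b`, which yields the entrywise bound; for Hermitian `b` the column sums are
row sums. The bound is summable over all pairs `(n, m)`, so `u` is even in `ℓ¹(ℤ × ℤ)`, hence
square summable, and a square-summable matrix acts boundedly on `ℓ²` through the inner products
with its conjugated rows.
-/

section SeparableBound

variable {R α β ι κ : Type*} [NonUnitalSeminormedRing R]

lemma norm_mul_mul_le_of_norm_le_add {a k b : R} {v w : ℝ} (hk : ‖k‖ ≤ v + w) :
    ‖a * k * b‖ ≤ ‖a‖ * v * ‖b‖ + ‖a‖ * (‖b‖ * w) :=
  calc ‖a * k * b‖ ≤ ‖a‖ * ‖k‖ * ‖b‖ := norm_mul₃_le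
    _ ≤ ‖a‖ * (v + w) * ‖b‖ := by gcongr
    _ = ‖a‖ * v * ‖b‖ + ‖a‖ * (‖b‖ * w) := by ring

lemma hasSum_mul_add_mul {f₀ f₁ : ι → ℝ} {g₀ g₁ : κ → ℝ} {A₀ A₁ B₀ B₁ : ℝ}
    (hf₀ : HasSum f₀ A₀) (hf₁ : HasSum f₁ A₁) (hg₀ : HasSum g₀ B₀) (hg₁ : HasSum g₁ B₁) :
    HasSum (fun p : ι × κ => f₁ p.1 * g₀ p.2 + f₀ p.1 * g₁ p.2) (A₁ * B₀ + A₀ * B₁) :=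
  (hf₁.mul hg₀ (summable_mul_of_summable_norm hf₁.summable.norm hg₀.summable.norm)).add
    (hf₀.mul hg₁ (summable_mul_of_summable_norm hf₀.summable.norm hg₁.summable.norm))

variable {K : ι → κ → R} {v : ι → ℝ} {w : κ → ℝ}

lemma summable_norm_mul_mul {a : ι → R} {b : κ → R} (hK : ∀ j k, ‖K j k‖ ≤ v j + w k)
    (ha : Summable fun j => ‖a j‖) (hav : Summable fun j => ‖a j‖ * v j)
    (hb : Summable fun k => ‖b k‖) (hbw : Summable fun k => ‖b k‖ * w k) :
    Summable fun p : ι × κ => ‖a p.1 * K p.1 p.2 * b p.2‖ :=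
  .of_nonneg_of_le (fun _ => norm_nonneg _)
    (fun p => norm_mul_mul_le_of_norm_le_add (hK p.1 p.2))
    (hasSum_mul_add_mul ha.hasSum hav.hasSum hb.hasSum hbw.hasSum).summable

lemma norm_tsum_mul_mul_le {a : ι → R} {b : κ → R} {A₀ A₁ B₀ B₁ : ℝ}
    (hK : ∀ j k, ‖K j k‖ ≤ v j + w k)
    (ha : HasSum (fun j => ‖a j‖) A₀) (hav : HasSum (fun j => ‖a j‖ * v j) A₁)
    (hb : HasSum (fun k => ‖b k‖) B₀) (hbw : HasSum (fun k => ‖b k‖ * w k) B₁) :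
    ‖∑' p : ι × κ, a p.1 * K p.1 p.2 * b p.2‖ ≤ A₁ * B₀ + A₀ * B₁ :=
  tsum_of_norm_bounded (hasSum_mul_add_mul ha hav hb hbw)
    fun p => norm_mul_mul_le_of_norm_le_add (hK p.1 p.2)

lemma summable_norm_tsum_mul_mul {a : α → ι → R} {b : κ → β → R}
    (hK : ∀ j k, ‖K j k‖ ≤ v j + w k)
    (ha : Summable fun q : α × ι => ‖a q.1 q.2‖)
    (hav : Summable fun q : α × ι => ‖a q.1 q.2‖ * v q.2)
    (hb : Summable fun q : κ × β => ‖b q.1 q.2‖)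
    (hbw : Summable fun q : κ × β => ‖b q.1 q.2‖ * w q.1) :
    Summable fun q : α × β => ‖∑' p : ι × κ, a q.1 p.1 * K p.1 p.2 * b p.2 q.2‖ :=
  .of_nonneg_of_le (fun _ => norm_nonneg _)
    (fun q => norm_tsum_mul_mul_le hK
      (ha.prod_factor q.1).hasSum (hav.prod_factor q.1).hasSum
      (hb.prod_symm.prod_factor q.2).hasSum (hbw.prod_symm.prod_factor q.2).hasSum)
    (hasSum_mul_add_mul ha.prod.hasSum hav.prod.hasSum
      hb.prod_symm.prod.hasSum hbw.prod_symm.prod.hasSum).summable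

end SeparableBound

section SquareSummable

open scoped ENNReal InnerProductSpace

lemma summable_norm_sq_of_summable_norm {ι E : Type*} [NormedAddCommGroup E] {f : ι → E}
    (hf : Summable fun i => ‖f i‖) : Summable fun i => ‖f i‖ ^ 2 := by
  have hf₁ : Memℓp f 1 := memℓp_gen (by simpa using hf)
  simpa using (hf₁.of_exponent_ge one_le_two).summable (by simp)

section Coordinates

variable {𝕜 ι E : Type*} {F : ι → Type*} {p : ℝ≥0∞} [NontriviallyNormedField 𝕜]
  [NormedAddCommGroup E] [NormedSpace 𝕜 E] [∀ i, NormedAddCommGroup (F i)]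
  [∀ i, NormedSpace 𝕜 (F i)]

lemma norm_clm_apply_le_norm_smul_toNorm (φ : lp (fun i => E →L[𝕜] F i) p) (f : E) (i : ι) :
    ‖φ i f‖ ≤ ‖(‖f‖ • lp.toNorm φ) i‖ := by
  simpa [lp.toNorm, mul_comm] using (φ i).le_opNorm f

variable [Fact (1 ≤ p)]

/-- The bounded operator into `ℓᵖ` whose coordinates are the members of an `ℓᵖ` family of bounded
operators. -/
noncomputable def clmOfCoordinates (φ : lp (fun i => E →L[𝕜] F i) p) : E →L[𝕜] lp F p :=
  LinearMap.mkContinuous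
    { toFun f := ⟨fun i => φ i f,
        (lp.memℓp (‖f‖ • lp.toNorm φ)).mono' (norm_clm_apply_le_norm_smul_toNorm φ f)⟩
      map_add' f g := lp.ext <| funext fun i => map_add (φ i) f g
      map_smul' c f := lp.ext <| funext fun i => map_smul (φ i) c f }
    ‖φ‖ fun f => by
      have hp : p ≠ 0 := (zero_lt_one.trans_le Fact.out).ne'
      calc _ ≤ ‖‖f‖ • lp.toNorm φ‖ := lp.norm_mono hp (norm_clm_apply_le_norm_smul_toNorm φ f)
        _ = ‖φ‖ * ‖f‖ := by rw [lp.norm_const_smul hp, norm_norm, lp.norm_toNorm, mul_comm]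

@[simp]
lemma clmOfCoordinates_apply (φ : lp (fun i => E →L[𝕜] F i) p) (f : E) (i : ι) :
    clmOfCoordinates φ f i = φ i f :=
  rfl

end Coordinates

variable {𝕜 ι κ : Type*} [RCLike 𝕜] {u : ι → κ → 𝕜}

/-- The `i`-th row of a square-summable matrix `u`, conjugated so that the inner product with it is
the linear functional `f ↦ ∑ k, u i k * f k`. -/
noncomputable def conjRow (hu : Summable fun q : ι × κ => ‖u q.1 q.2‖ ^ 2) (i : ι) :
    lp (fun _ : κ => 𝕜) 2 :=
  ⟨fun k => star (u i k), memℓp_gen (by simpa using hu.prod_factor i)⟩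

lemma norm_conjRow_sq (hu : Summable fun q : ι × κ => ‖u q.1 q.2‖ ^ 2) (i : ι) :
    ‖conjRow hu i‖ ^ 2 = ∑' k, ‖u i k‖ ^ 2 := by
  simpa [conjRow] using lp.norm_rpow_eq_tsum (p := 2) (by simp) (conjRow hu i)

lemma memℓp_innerSL_conjRow (hu : Summable fun q : ι × κ => ‖u q.1 q.2‖ ^ 2) :
    Memℓp (fun i => innerSL 𝕜 (conjRow hu i)) 2 :=
  memℓp_gen (by simpa [norm_conjRow_sq] using hu.prod)

lemma exists_clm_apply_single_of_summable_norm_sq [DecidableEq κ]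
    (hu : Summable fun q : ι × κ => ‖u q.1 q.2‖ ^ 2) :
    ∃ T : lp (fun _ : κ => 𝕜) 2 →L[𝕜] lp (fun _ : ι => 𝕜) 2,
      ∀ i k, T (lp.single 2 k 1) i = u i k :=
  ⟨clmOfCoordinates ⟨_, memℓp_innerSL_conjRow hu⟩,
    fun i k => by simp [lp.inner_single_right, conjRow]⟩

end SquareSummable

section Separation

variable {E : Type*} [NormedAddCommGroup E] {x : ℤ → E} {δ : ℕ → ℝ}

/-- The set of distances `|x_j - x_k|` with `|j|, |k| ≤ p` and `j ≠ k`, whose minimum is the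
separation `δ_p`. -/
def pairDistances (x : ℤ → E) (p : ℕ) : Set ℝ :=
  {d : ℝ | ∃ j k : ℤ, |j| ≤ (p : ℤ) ∧ |k| ≤ (p : ℤ) ∧ j ≠ k ∧ d = ‖x j - x k‖}

lemma pos_of_mem_pairDistances (hx : Function.Injective x) {p : ℕ} {d : ℝ}
    (hd : d ∈ pairDistances x p) : 0 < d := by
  obtain ⟨j, k, -, -, hjk, rfl⟩ := hd
  exact norm_pos_iff.mpr (sub_ne_zero.mpr (hx.ne hjk))

lemma separation_pos (hx : Function.Injective x) (hδ0 : 0 < δ 0)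
    (hδ : ∀ p : ℕ, 1 ≤ p → IsLeast (pairDistances x p) (δ p)) (p : ℕ) : 0 < δ p := by
  rcases p.eq_zero_or_pos with rfl | hp
  · exact hδ0
  · exact pos_of_mem_pairDistances hx (hδ p hp).1

lemma separation_max_le_norm_sub (hδ : ∀ p : ℕ, 1 ≤ p → IsLeast (pairDistances x p) (δ p))
    {j k : ℤ} (hjk : j ≠ k) : δ (max j.natAbs k.natAbs) ≤ ‖x j - x k‖ :=
  (hδ _ (by lia)).2
    ⟨j, k, by rw [Int.abs_eq_natAbs]; lia, by rw [Int.abs_eq_natAbs]; lia, hjk, rfl⟩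

lemma inv_norm_sub_le_inv_separation_add (hx : Function.Injective x) (hδ0 : 0 < δ 0)
    (hδ : ∀ p : ℕ, 1 ≤ p → IsLeast (pairDistances x p) (δ p)) {j k : ℤ} (hjk : j ≠ k) :
    ‖x j - x k‖⁻¹ ≤ (δ j.natAbs)⁻¹ + (δ k.natAbs)⁻¹ := by
  have δ_pos := separation_pos hx hδ0 hδ
  have inv_δ_pos (p : ℕ) : 0 < (δ p)⁻¹ := inv_pos.mpr (δ_pos p)
  calc ‖x j - x k‖⁻¹ ≤ (δ (max j.natAbs k.natAbs))⁻¹ :=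
        inv_anti₀ (δ_pos _) (separation_max_le_norm_sub hδ hjk)
    _ ≤ (δ j.natAbs)⁻¹ + (δ k.natAbs)⁻¹ := by
        rcases max_choice j.natAbs k.natAbs with h | h <;> rw [h]
        · exact le_add_of_nonneg_right (inv_δ_pos _).le
        · exact le_add_of_nonneg_left (inv_δ_pos _).le

end Separation

section NormalizedSums

variable {𝕜 ι : Type*} [Field 𝕜] [TopologicalSpace 𝕜] {f d : ι → 𝕜} {c C : 𝕜}

lemma hasSum_mul_of_eq_one_div_mul_tsum (hc : c ≠ 0) (hf : Summable f)
    (hC : C = 1 / c * ∑' j, f j) : HasSum f (c * C) := by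
  rw [hC, one_div, mul_inv_cancel_left₀ hc]
  exact hf.hasSum

lemma hasSum_mul_inv_mul_inv [IsTopologicalSemiring 𝕜] (hf : Summable fun j => f j / d j)
    (hC : C = 1 / c * ∑' j, f j / d j) : HasSum (fun j => f j * (c⁻¹ * (d j)⁻¹)) C := by
  rw [hC]
  exact (hf.hasSum.mul_left (1 / c)).congr_fun fun j => by ring

end NormalizedSums

section Green

variable {ζ : ℂ} {x : ℤ → EuclideanSpace ℝ (Fin 3)} {δ : ℕ → ℝ} {b : ℤ → ℤ → ℂ}

lemma norm_greenK_le (hζ : 0 ≤ ζ.im) (v : EuclideanSpace ℝ (Fin 3)) :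
    ‖greenK ζ v‖ ≤ (4 * π)⁻¹ * ‖v‖⁻¹ := by
  have norm_exp_le_one : ‖Complex.exp (I * ζ * (‖v‖ : ℝ))‖ ≤ 1 := by
    rw [Complex.norm_exp, Real.exp_le_one_iff]
    simpa using mul_nonneg hζ (norm_nonneg v)
  have norm_denom : ‖((4 * π * ‖v‖ : ℝ) : ℂ)‖ = 4 * π * ‖v‖ :=
    Complex.norm_of_nonneg (by positivity)
  rw [greenK, norm_div, norm_denom, ← mul_inv, ← one_div]
  gcongr

/-- The matrix of Green kernels `g(ζ; x_j - x_k)` between distinct points, with zero diagonal. It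
turns the restricted double series `uMat` into a product of three matrices. -/
noncomputable def greenMatrix {ι : Type*} [DecidableEq ι] (ζ : ℂ)
    (x : ι → EuclideanSpace ℝ (Fin 3)) (j k : ι) : ℂ :=
  if k = j then 0 else greenK ζ (x j - x k)

lemma uMat_eq_tsum_greenMatrix (n m : ℤ) :
    uMat ζ x b n m = ∑' p : ℤ × ℤ, b n p.1 * greenMatrix ζ x p.1 p.2 * b p.2 m := by
  simp only [uMat, greenMatrix, mul_ite, ite_mul, mul_zero, zero_mul]

lemma norm_greenMatrix_le (hx : Function.Injective x) (hδ0 : 0 < δ 0)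
    (hδ : ∀ p : ℕ, 1 ≤ p → IsLeast (pairDistances x p) (δ p)) (hζ : 0 ≤ ζ.im) (j k : ℤ) :
    ‖greenMatrix ζ x j k‖ ≤ (4 * π)⁻¹ * (δ j.natAbs)⁻¹ + (4 * π)⁻¹ * (δ k.natAbs)⁻¹ := by
  have δ_pos := separation_pos hx hδ0 hδ
  rcases eq_or_ne k j with hkj | hkj
  · rw [greenMatrix, if_pos hkj, norm_zero]
    exact add_nonneg (by have := δ_pos j.natAbs; positivity)
      (by have := δ_pos k.natAbs; positivity)
  · rw [greenMatrix, if_neg hkj, ← mul_add]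
    exact (norm_greenK_le hζ _).trans (by
      gcongr
      exact inv_norm_sub_le_inv_separation_add hx hδ0 hδ hkj.symm)

end Green

theorem stmt6_general (x : ℤ → EuclideanSpace ℝ (Fin 3)) (hx : Function.Injective x)
    (δ : ℕ → ℝ) (hδ0 : 0 < δ 0)
    (hδ : ∀ p : ℕ, 1 ≤ p → IsLeast (pairDistances x p) (δ p))
    (b : ℤ → ℤ → ℂ)
    (hb : Summable fun p : ℤ × ℤ => ‖b p.1 p.2‖)
    (hrow : Summable fun p : ℤ × ℤ => ‖b p.1 p.2‖ / δ p.2.natAbs)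
    (hcol : Summable fun p : ℤ × ℤ => ‖b p.1 p.2‖ / δ p.1.natAbs)
    (R0 R1 C0 C1 : ℤ → ℝ)
    (hR0 : ∀ n, R0 n = (1 / (4 * π)) * ∑' j : ℤ, ‖b n j‖)
    (hR1 : ∀ n, R1 n = (1 / (4 * π)) * ∑' j : ℤ, ‖b n j‖ / δ j.natAbs)
    (hC0 : ∀ m, C0 m = (1 / (4 * π)) * ∑' j : ℤ, ‖b j m‖)
    (hC1 : ∀ m, C1 m = (1 / (4 * π)) * ∑' j : ℤ, ‖b j m‖ / δ j.natAbs)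
    (ζ : ℂ) (hζ : 0 ≤ ζ.im) :
    (∀ n m : ℤ, Summable fun p : ℤ × ℤ =>
      if p.2 = p.1 then 0 else ‖b n p.1 * greenK ζ (x p.1 - x p.2) * b p.2 m‖) ∧
    (∀ n m : ℤ, ‖uMat ζ x b n m‖ ≤ 4 * π * (R1 n * C0 m + R0 n * C1 m)) ∧
    (Summable fun q : ℤ × ℤ => ‖uMat ζ x b q.1 q.2‖ ^ 2) ∧
    ∃ T : lp (fun _ : ℤ => ℂ) 2 →L[ℂ] lp (fun _ : ℤ => ℂ) 2,
      ∀ n m : ℤ, (T (lp.single 2 m 1) : ∀ _ : ℤ, ℂ) n = uMat ζ x b n m := by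
  have hK := norm_greenMatrix_le (ζ := ζ) hx hδ0 hδ hζ
  have hrow' := (hasSum_mul_inv_mul_inv (c := 4 * π) hrow rfl).summable
  have hcol' := (hasSum_mul_inv_mul_inv (c := 4 * π) hcol rfl).summable
  have hu : Summable fun q : ℤ × ℤ => ‖uMat ζ x b q.1 q.2‖ := by
    simpa only [uMat_eq_tsum_greenMatrix] using summable_norm_tsum_mul_mul hK hb hrow' hb hcol'
  have hu_sq := summable_norm_sq_of_summable_norm hu
  refine ⟨fun n m => ?_, fun n m => ?_, hu_sq,
    exists_clm_apply_single_of_summable_norm_sq hu_sq⟩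
  · refine (summable_norm_mul_mul hK (hb.prod_factor n) (hrow'.prod_factor n)
      (hb.prod_symm.prod_factor m) (hcol'.prod_symm.prod_factor m)).congr fun p => ?_
    split_ifs with hp <;> simp [greenMatrix, hp]
  · have sum_row := hasSum_mul_of_eq_one_div_mul_tsum (by positivity) (hb.prod_factor n) (hR0 n)
    have sum_col := hasSum_mul_of_eq_one_div_mul_tsum (by positivity)
      (hb.prod_symm.prod_factor m) (hC0 m)
    have wsum_row := hasSum_mul_inv_mul_inv (hrow.prod_factor n) (hR1 n)
    have wsum_col := hasSum_mul_inv_mul_inv (hcol.prod_symm.prod_factor m) (hC1 m)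
    rw [uMat_eq_tsum_greenMatrix]
    exact (norm_tsum_mul_mul_le hK sum_row wsum_row sum_col wsum_col).trans_eq (by ring)

/-- Under the summability assumptions on the Hermitian matrix `b` (weighted
by the separation quantities `δ_p`), for every `ζ` with `Im ζ ≥ 0` the double series defining
`u_{nm}` converges absolutely, `|u_{nm}| ≤ 4π (C¹(n) C⁰(m) + C⁰(n) C¹(m))`, and
`Σ_{n,m} |u_{nm}|² < ∞`; in particular the matrix `(u_{nm})` defines a (Hilbert–Schmidt)
bounded operator on `ℓ²(ℤ)`. -/
theorem stmt6 (x : ℤ → EuclideanSpace ℝ (Fin 3)) (hx : Function.Injective x)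
    (hx0 : x 0 ≠ 0)
    (δ : ℕ → ℝ) (hδ0 : δ 0 = ‖x 0‖)
    (hδ : ∀ p : ℕ, 1 ≤ p → IsLeast
      {d : ℝ | ∃ j k : ℤ, |j| ≤ (p : ℤ) ∧ |k| ≤ (p : ℤ) ∧ j ≠ k ∧ d = ‖x j - x k‖} (δ p))
    (b : ℤ → ℤ → ℂ) (hherm : ∀ m n : ℤ, b m n = starRingEnd ℂ (b n m))
    (hb1 : Summable fun p : ℤ × ℤ => ‖b p.1 p.2‖)
    (hb2 : Summable fun p : ℤ × ℤ => ‖b p.1 p.2‖ / δ p.2.natAbs)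
    (C0 C1 : ℤ → ℝ)
    (hC0 : ∀ m, C0 m = (1 / (4 * Real.pi)) * ∑' j : ℤ, ‖b m j‖)
    (hC1 : ∀ m, C1 m = (1 / (4 * Real.pi)) * ∑' j : ℤ, ‖b m j‖ / δ j.natAbs)
    (ζ : ℂ) (hζ : 0 ≤ ζ.im) :
    (∀ n m : ℤ, Summable fun p : ℤ × ℤ =>
      if p.2 = p.1 then 0 else ‖b n p.1 * greenK ζ (x p.1 - x p.2) * b p.2 m‖) ∧
    (∀ n m : ℤ, ‖uMat ζ x b n m‖
      ≤ 4 * Real.pi * (C1 n * C0 m + C0 n * C1 m)) ∧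
    (Summable fun q : ℤ × ℤ => ‖uMat ζ x b q.1 q.2‖ ^ 2) ∧
    ∃ T : lp (fun _ : ℤ => ℂ) 2 →L[ℂ] lp (fun _ : ℤ => ℂ) 2,
      ∀ n m : ℤ, (T (lp.single 2 m 1) : ∀ _ : ℤ, ℂ) n = uMat ζ x b n m := by
  have hsymm (m n : ℤ) : ‖b m n‖ = ‖b n m‖ := by rw [hherm, RCLike.norm_conj]
  exact stmt6_general x hx δ (hδ0 ▸ norm_pos_iff.mpr hx0) hδ b hb1 hb2
    (hb2.prod_symm.congr fun p => by simp only [Prod.fst_swap, Prod.snd_swap, hsymm p.1])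
    C0 C1 C0 C1 hC0 hC1 (fun m => by simp only [hC0, hsymm m])
    (fun m => by simp only [hC1, hsymm m]) ζ hζ
end

section
/- Let ζ ∈ ℂ with Im ζ > 0, let (x_n)_{n∈ℤ} be pairwise distinct points of ℝ³ such that the closure of the set {x_n : n ∈ ℤ} has Lebesgue measure zero, and let c : ℤ → ℂ satisfy Σ_{n∈ℤ} |c_n| < ∞. Let w ∈ L²(ℝ³) and suppose that for almost every x ∈ ℝ³, ∫_{ℝ³} (e^{iζ|x−y|}/(4π|x−y|))·w(y) dy = Σ_{n∈ℤ} c_n · e^{iζ|x−x_n|}/(4π|x−x_n|). Then w = 0 almost everywhere (and consequently the right-hand side vanishes identically). -/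
open MeasureTheory Complex Real

/-!
Slicing `ℝ³` by planes and rotating shows that the Fourier transform of the Green kernel is the
inverse of the polynomial `4π²|ξ|² - ζ²`. Hence every Schwartz function `φ` is the convolution of
the kernel with a Schwartz function `ψ`, and integrating the hypothesis against `ψ` turns it into
`∫ φ w = ∑ cₙ φ(xₙ)`. An absolutely continuous measure and a purely atomic one can only agree if
both vanish: bumps shrinking to a point `b` isolate the total coefficient `∑_{xₙ = b} cₙ`.
-/

open Filter Set
open scoped ContDiff Convolution ENNReal FourierTransform RealInnerProductSpace SchwartzMap Topology

section TestFunctions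

variable {ι F : Type*} [NormedAddCommGroup F] [NormedSpace ℝ F] {c : ι → F}

theorem tsum_smul_eq_zero_of_tsum_fiber_eq_zero [CompleteSpace F] {X : Type*} {x : ι → X}
    (hc : Summable fun n ↦ ‖c n‖) (hfib : ∀ p, ∑' n : x ⁻¹' {p}, c n = 0) {φ : X → ℝ} {C : ℝ}
    (hφ : ∀ y, ‖φ y‖ ≤ C) :
    ∑' n, φ (x n) • c n = 0 := by
  have hsum : Summable fun n ↦ φ (x n) • c n :=
    .of_norm_bounded (hc.mul_left C) fun n ↦ by
      rw [norm_smul]; exact mul_le_mul_of_nonneg_right (hφ _) (norm_nonneg _)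
  have hfiber (p : X) : ∑' n : x ⁻¹' {p}, φ (x n) • c n = 0 := by
    calc ∑' n : x ⁻¹' {p}, φ (x n) • c n = ∑' n : x ⁻¹' {p}, φ p • c n :=
          tsum_congr fun n ↦ by rw [show x n = p from n.2]
      _ = 0 := by rw [tsum_const_smul'', hfib p, smul_zero]
  simpa [hfiber] using (hsum.hasSum.tsum_fiberwise x).tsum_eq.symm

variable {E : Type*} [NormedAddCommGroup E] [NormedSpace ℝ E] {x : ι → E}

/-- Smooth bumps at `p`, equal to `1` on the ball of radius `1/(k+2)` and supported in the ball of
radius `1/(k+1)`; they probe the mass that a measure puts on the point `p`. -/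
noncomputable def shrinkingBump (p : E) (k : ℕ) : ContDiffBump p where
  rIn := 1 / (k + 2)
  rOut := 1 / (k + 1)
  rIn_pos := by positivity
  rIn_lt_rOut := by gcongr; norm_num

theorem tendsto_shrinkingBump [HasContDiffBump E] (p y : E) :
    Tendsto (fun k ↦ shrinkingBump p k y) atTop (𝓝 (indicator {p} 1 y)) := by
  by_cases hy : y = p
  · subst hy
    have hone (k : ℕ) : shrinkingBump y k y = 1 :=
      (shrinkingBump y k).one_of_mem_closedBall
        (Metric.mem_closedBall_self (shrinkingBump y k).rIn_pos.le)
    simp [hone]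
  · have hzero : ∀ᶠ k : ℕ in atTop, shrinkingBump p k y = 0 := by
      filter_upwards [tendsto_one_div_add_atTop_nhds_zero_nat.eventually_le_const (dist_pos.2 hy)]
        with k hk using (shrinkingBump p k).zero_of_le_dist hk
    simpa [hy] using tendsto_const_nhds.congr' (hzero.mono fun k hk ↦ hk.symm)

theorem norm_shrinkingBump_smul_le [HasContDiffBump E] (p y : E) (k : ℕ) (u : F) :
    ‖shrinkingBump p k y • u‖ ≤ ‖u‖ := by
  rw [norm_smul, Real.norm_of_nonneg (shrinkingBump p k).nonneg]
  exact mul_le_of_le_one_left (norm_nonneg u) (shrinkingBump p k).le_one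

theorem tendsto_tsum_shrinkingBump_smul [HasContDiffBump E] [CompleteSpace F]
    (hc : Summable fun n ↦ ‖c n‖) (p : E) :
    Tendsto (fun k ↦ ∑' n, shrinkingBump p k (x n) • c n) atTop (𝓝 (∑' n : x ⁻¹' {p}, c n)) := by
  rw [tsum_subtype]
  refine tendsto_tsum_of_dominated_convergence hc (fun n ↦ ?_)
    (.of_forall fun k n ↦ norm_shrinkingBump_smul_le p (x n) k (c n))
  have hlim := (tendsto_shrinkingBump p (x n)).smul_const (c n)
  by_cases hn : x n = p <;> simpa [indicator, hn] using hlim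

variable [FiniteDimensional ℝ E] [MeasurableSpace E] [BorelSpace E] {μ : Measure E} {w : E → F}

theorem tendsto_integral_shrinkingBump_smul [NullSingletonClass μ] (hw : LocallyIntegrable w μ)
    (p : E) :
    Tendsto (fun k ↦ ∫ y, shrinkingBump p k y • w y ∂μ) atTop (𝓝 0) := by
  have hball : Integrable (indicator (Metric.closedBall p 1) fun y ↦ ‖w y‖) μ :=
    IntegrableOn.integrable_indicator
      (hw.integrableOn_isCompact (isCompact_closedBall p 1)).norm
      Metric.isClosed_closedBall.measurableSet
  have hbound (k : ℕ) (y : E) :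
      ‖shrinkingBump p k y • w y‖ ≤ indicator (Metric.closedBall p 1) (fun y ↦ ‖w y‖) y := by
    by_cases hy : y ∈ Metric.closedBall p 1
    · simpa [hy] using norm_shrinkingBump_smul_le p y k (w y)
    · have hfar : (shrinkingBump p k).rOut ≤ dist y p :=
        (div_le_one_of_le₀ (by simp) (by positivity)).trans (by simpa using (not_le.1 hy).le)
      simp [hy, (shrinkingBump p k).zero_of_le_dist hfar]
  have hlim : ∀ᵐ y ∂μ, Tendsto (fun k ↦ shrinkingBump p k y • w y) atTop (𝓝 0) := by
    filter_upwards [compl_mem_ae_iff.2 (measure_singleton p)] with y hy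
    have hyp : y ≠ p := hy
    simpa [hyp] using (tendsto_shrinkingBump p y).smul_const (w y)
  simpa using tendsto_integral_of_dominated_convergence _
    (fun k ↦ (shrinkingBump p k).continuous.aestronglyMeasurable.smul hw.aestronglyMeasurable)
    hball (fun k ↦ .of_forall (hbound k)) hlim

variable [CompleteSpace F]

theorem tsum_fiber_eq_zero_of_integral_smul_eq_tsum [NullSingletonClass μ]
    (hw : LocallyIntegrable w μ) (hc : Summable fun n ↦ ‖c n‖)
    (h : ∀ φ : E → ℝ, ContDiff ℝ ∞ φ → HasCompactSupport φ →
      ∫ y, φ y • w y ∂μ = ∑' n, φ (x n) • c n) (p : E) :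
    ∑' n : x ⁻¹' {p}, c n = 0 := by
  refine tendsto_nhds_unique (tendsto_tsum_shrinkingBump_smul hc p)
    ((tendsto_integral_shrinkingBump_smul hw p).congr fun k ↦ ?_)
  exact h _ (shrinkingBump p k).contDiff (shrinkingBump p k).hasCompactSupport

theorem ae_eq_zero_and_tsum_fiber_eq_zero [NullSingletonClass μ] (hw : LocallyIntegrable w μ)
    (hc : Summable fun n ↦ ‖c n‖)
    (h : ∀ φ : E → ℝ, ContDiff ℝ ∞ φ → HasCompactSupport φ →
      ∫ y, φ y • w y ∂μ = ∑' n, φ (x n) • c n) :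
    (∀ᵐ y ∂μ, w y = 0) ∧ ∀ p, ∑' n : x ⁻¹' {p}, c n = 0 := by
  have hfib := tsum_fiber_eq_zero_of_integral_smul_eq_tsum hw hc h
  refine ⟨ae_eq_zero_of_integral_contDiff_smul_eq_zero hw fun φ hφ hφc ↦ ?_, hfib⟩
  obtain ⟨C, hC⟩ := hφc.exists_bound_of_continuous hφ.continuous
  rw [h φ hφ hφc, tsum_smul_eq_zero_of_tsum_fiber_eq_zero hc hfib hC]

end TestFunctions

section Fubini

variable {𝕜 G : Type*} [RCLike 𝕜] [AddCommGroup G] [MeasurableSpace G]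
  {μ : Measure G} [μ.IsAddRightInvariant] {p q : ℝ≥0∞} {f g w : G → 𝕜}

theorem integral_mul_tsum_translates [MeasurableAdd G] {ι : Type*} [Countable ι] {c : ι → 𝕜} {C : ℝ}
    (hf : AEStronglyMeasurable f μ) (hfC : ∀ a, ‖f a‖ ≤ C) (hg : Integrable g μ)
    (hc : Summable fun n ↦ ‖c n‖) (x : ι → G) :
    ∫ a, f a * ∑' n, c n * g (a - x n) ∂μ = ∑' n, c n * ∫ a, f a * g (a - x n) ∂μ := by
  have hint (n : ι) : Integrable (fun a ↦ f a * g (a - x n)) μ :=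
    (hg.comp_sub_right (x n)).bdd_mul hf (.of_forall hfC)
  have hnorm (n : ι) : ∫ a, ‖f a * g (a - x n)‖ ∂μ ≤ C * ∫ a, ‖g a‖ ∂μ := by
    rw [← integral_sub_right_eq_self (fun a ↦ ‖g a‖) (x n), ← integral_const_mul]
    refine integral_mono (hint n).norm ((hg.comp_sub_right (x n)).norm.const_mul C) fun a ↦ ?_
    simpa only [norm_mul] using mul_le_mul_of_nonneg_right (hfC a) (norm_nonneg _)
  have hsum : Summable fun n ↦ ∫ a, ‖c n * (f a * g (a - x n))‖ ∂μ := by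
    refine .of_nonneg_of_le (fun n ↦ by positivity) (fun n ↦ ?_)
      (hc.mul_right (C * ∫ a, ‖g a‖ ∂μ))
    simp only [norm_mul (c n), integral_const_mul]
    exact mul_le_mul_of_nonneg_left (hnorm n) (norm_nonneg _)
  simp only [← tsum_mul_left, ← integral_const_mul, mul_left_comm (f _)]
  exact (integral_tsum_of_summable_integral_norm (fun n ↦ (hint n).const_mul (c n)) hsum).symm

theorem lintegral_enorm_translate_mul_le [MeasurableAdd G] [p.HolderConjugate q]
    (hf : AEStronglyMeasurable f μ) (hw : AEStronglyMeasurable w μ) (v : G) :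
    ∫⁻ y, ‖f (y + v) * w y‖ₑ ∂μ ≤ eLpNorm f p μ * eLpNorm w q μ := by
  have hv := measurePreserving_add_right μ v
  rw [← eLpNorm_comp_measurePreserving hf hv, ← eLpNorm_one_eq_lintegral_enorm]
  exact eLpNorm_smul_le_mul_eLpNorm (φ := fun y ↦ f (y + v)) (p := p) (q := q) (r := 1) hw
    (hf.comp_measurePreserving hv)

variable [MeasurableAdd₂ G] [MeasurableNeg G] [SFinite μ]

theorem integrable_mul_translate_mul [p.HolderConjugate q] (hf : MemLp f p μ)
    (hg : Integrable g μ) (hw : MemLp w q μ) :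
    Integrable (fun z : G × G ↦ f z.1 * (g (z.1 - z.2) * w z.2)) (μ.prod μ) := by
  have hmeas : AEStronglyMeasurable (fun z : G × G ↦ g z.1 * (f (z.2 + z.1) * w z.2))
      (μ.prod μ) :=
    hg.aestronglyMeasurable.comp_fst.mul <|
      (hf.aestronglyMeasurable.comp_snd.comp_measurePreserving
        (measurePreserving_prod_add_right μ μ)).mul hw.aestronglyMeasurable.comp_snd
  have hint : Integrable (fun z : G × G ↦ g z.1 * (f (z.2 + z.1) * w z.2)) (μ.prod μ) := by
    refine ⟨hmeas, ?_⟩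
    calc ∫⁻ z, ‖g z.1 * (f (z.2 + z.1) * w z.2)‖ₑ ∂μ.prod μ
        = ∫⁻ v, ‖g v‖ₑ * ∫⁻ y, ‖f (y + v) * w y‖ₑ ∂μ ∂μ := by
          rw [lintegral_prod _ hmeas.enorm]
          simp only [enorm_mul (g _), lintegral_const_mul' _ _ enorm_ne_top]
      _ ≤ ∫⁻ v, ‖g v‖ₑ * (eLpNorm f p μ * eLpNorm w q μ) ∂μ := by
          gcongr with v
          exact lintegral_enorm_translate_mul_le hf.1 hw.1 v
      _ = (∫⁻ v, ‖g v‖ₑ ∂μ) * (eLpNorm f p μ * eLpNorm w q μ) :=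
          lintegral_mul_const' _ _ (ENNReal.mul_ne_top hf.2.ne hw.2.ne)
      _ < ⊤ := ENNReal.mul_lt_top hg.2 (ENNReal.mul_lt_top hf.2 hw.2)
  refine ((measurePreserving_sub_prod μ μ).integrable_comp_of_integrable hint).congr
    (.of_forall fun z ↦ ?_)
  simp only [Function.comp_apply, add_sub_cancel]
  ring

theorem integral_mul_integral_translate_mul [p.HolderConjugate q] (hf : MemLp f p μ)
    (hg : Integrable g μ) (hw : MemLp w q μ) :
    ∫ a, f a * ∫ y, g (a - y) * w y ∂μ ∂μ = ∫ y, (∫ a, f a * g (a - y) ∂μ) * w y ∂μ := by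
  simp only [← integral_const_mul, ← integral_mul_const, mul_assoc]
  exact integral_integral_swap (integrable_mul_translate_mul hf hg hw)

end Fubini

section Convolution

variable {V : Type*} [NormedAddCommGroup V] [InnerProductSpace ℝ V] [FiniteDimensional ℝ V]
  [MeasurableSpace V] [BorelSpace V] {g m : V → ℂ}

theorem convolution_fourierMultiplierCLM (hg : Integrable g) (hm : m.HasTemperateGrowth)
    (hgm : ∀ ξ, 𝓕 g ξ * m ξ = 1) (φ : 𝓢(V, ℂ)) :
    g ⋆[ContinuousLinearMap.mul ℂ ℂ] SchwartzMap.fourierMultiplierCLM ℂ m φ = φ := by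
  set ψ := SchwartzMap.fourierMultiplierCLM ℂ m φ with hψ
  have hfourierψ (ξ : V) : 𝓕 (ψ : V → ℂ) ξ = m ξ * 𝓕 (φ : V → ℂ) ξ := by
    simp [← SchwartzMap.fourier_coe, hψ, SchwartzMap.fourierMultiplierCLM_apply,
      SchwartzMap.smulLeftCLM_apply_apply hm]
  have hfourier : 𝓕 (g ⋆[ContinuousLinearMap.mul ℂ ℂ] ψ) = 𝓕 (φ : V → ℂ) := by
    ext ξ
    rw [Real.fourier_mul_convolution_eq hg ψ.integrable, hfourierψ, ← mul_assoc, hgm, one_mul]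
  have hcont : Continuous (g ⋆[ContinuousLinearMap.mul ℂ ℂ] ψ) :=
    BddAbove.continuous_convolution_right_of_integrable _
      ⟨_, forall_mem_range.2 ψ.toBoundedContinuousFunction.norm_coe_le_norm⟩ hg ψ.continuous
  have hint : Integrable (g ⋆[ContinuousLinearMap.mul ℂ ℂ] ψ) :=
    hg.integrable_convolution _ ψ.integrable
  have hintφ : Integrable (𝓕 (φ : V → ℂ)) := by
    rw [← SchwartzMap.fourier_coe]; exact (𝓕 φ).integrable
  rw [← hcont.fourierInv_fourier_eq hint (hfourier ▸ hintφ), hfourier,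
    φ.continuous.fourierInv_fourier_eq φ.integrable hintφ]

theorem integral_fourierMultiplierCLM_mul_translate (hg : Integrable g) (heven : g.Even)
    (hm : m.HasTemperateGrowth) (hgm : ∀ ξ, 𝓕 g ξ * m ξ = 1) (φ : 𝓢(V, ℂ)) (y : V) :
    ∫ a, SchwartzMap.fourierMultiplierCLM ℂ m φ a * g (a - y) = φ y := by
  rw [← convolution_fourierMultiplierCLM hg hm hgm φ, convolution_eq_swap]
  congr! 2 with a
  rw [← heven (a - y), neg_sub, mul_comm, ContinuousLinearMap.mul_apply']

theorem integral_schwartz_mul_eq_tsum {ι : Type*} [Countable ι] {x : ι → V} {c : ι → ℂ}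
    {p : ℝ≥0∞} {w : V → ℂ} (hg : Integrable g) (heven : g.Even)
    (hm : m.HasTemperateGrowth) (hgm : ∀ ξ, 𝓕 g ξ * m ξ = 1) (hp : 1 ≤ p) (hw : MemLp w p)
    (hc : Summable fun n ↦ ‖c n‖)
    (h : ∀ᵐ a, ∫ y, g (a - y) * w y = ∑' n, c n * g (a - x n)) (φ : 𝓢(V, ℂ)) :
    ∫ y, φ y * w y = ∑' n, c n * φ (x n) := by
  set ψ := SchwartzMap.fourierMultiplierCLM ℂ m φ
  have hφ (y : V) : ∫ a, ψ a * g (a - y) = φ y :=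
    integral_fourierMultiplierCLM_mul_translate hg heven hm hgm φ y
  have := (ENNReal.HolderConjugate.conjExponent hp).symm
  calc ∫ y, φ y * w y = ∫ a, ψ a * ∫ y, g (a - y) * w y := by
        simp only [← hφ]
        exact (integral_mul_integral_translate_mul (ψ.memLp p.conjExponent) hg hw).symm
    _ = ∫ a, ψ a * ∑' n, c n * g (a - x n) :=
        integral_congr_ae (h.mono fun a ha ↦ congrArg (ψ a * ·) ha)
    _ = ∑' n, c n * φ (x n) := by
        simp only [← hφ]
        exact integral_mul_tsum_translates ψ.continuous.aestronglyMeasurable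
          ψ.toBoundedContinuousFunction.norm_coe_le_norm hg hc x

theorem ae_eq_zero_and_tsum_fiber_eq_zero_of_convolution [Nontrivial V] {ι : Type*} [Countable ι]
    {x : ι → V} {c : ι → ℂ} {p : ℝ≥0∞} {w : V → ℂ} (hg : Integrable g) (heven : g.Even)
    (hm : m.HasTemperateGrowth) (hgm : ∀ ξ, 𝓕 g ξ * m ξ = 1) (hp : 1 ≤ p) (hw : MemLp w p)
    (hc : Summable fun n ↦ ‖c n‖)
    (h : ∀ᵐ a, ∫ y, g (a - y) * w y = ∑' n, c n * g (a - x n)) :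
    (∀ᵐ y, w y = 0) ∧ ∀ b, ∑' n : x ⁻¹' {b}, c n = 0 := by
  refine ae_eq_zero_and_tsum_fiber_eq_zero (hw.locallyIntegrable hp) hc fun φ hφ hφc ↦ ?_
  have hcompact : HasCompactSupport fun y ↦ (φ y : ℂ) := hφc.comp_left ofReal_zero
  have hsmooth : ContDiff ℝ ∞ fun y ↦ (φ y : ℂ) := Complex.ofRealCLM.contDiff.comp hφ
  simpa [mul_comm (c _)] using integral_schwartz_mul_eq_tsum hg heven hm hgm hp hw hc h
    (hcompact.toSchwartzMap hsmooth)

end Convolution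

section Fourier

theorem fourier_exp_neg_mul_abs {a : ℂ} (ha : 0 < a.re) (k : ℝ) :
    𝓕 (fun z : ℝ ↦ cexp (-a * |z|)) k = 2 * a / (a ^ 2 + 4 * π ^ 2 * k ^ 2) := by
  have hneg : 0 < (a - 2 * π * k * I).re := by simpa using ha
  have hpos : (-a - 2 * π * k * I).re < 0 := by simpa using ha
  have hIic : EqOn (fun z : ℝ ↦ cexp ((a - 2 * π * k * I) * z))
      (fun z ↦ cexp (↑(-2 * π * z * k) * I) • cexp (-a * |z|)) (Iic 0) := fun z hz ↦ by
    simp only [abs_of_nonpos (mem_Iic.1 hz), smul_eq_mul, ← Complex.exp_add]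
    push_cast
    ring_nf
  have hIoi : EqOn (fun z : ℝ ↦ cexp ((-a - 2 * π * k * I) * z))
      (fun z ↦ cexp (↑(-2 * π * z * k) * I) • cexp (-a * |z|)) (Ioi 0) := fun z hz ↦ by
    simp only [abs_of_pos (mem_Ioi.1 hz), smul_eq_mul, ← Complex.exp_add]
    push_cast
    ring_nf
  have hfactor : a ^ 2 + 4 * π ^ 2 * k ^ 2 = (a - 2 * π * k * I) * -(-a - 2 * π * k * I) := by
    linear_combination (4 * π ^ 2 * k ^ 2 : ℂ) * I_sq
  have hne₁ : a - 2 * π * k * I ≠ 0 := fun h ↦ by simp [h] at hneg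
  have hne₂ : -a - 2 * π * k * I ≠ 0 := fun h ↦ by simp [h] at hpos
  rw [Real.fourier_real_eq_integral_exp_smul, ← intervalIntegral.integral_Iic_add_Ioi (b := 0)
      ((integrableOn_exp_mul_complex_Iic hneg 0).congr_fun hIic measurableSet_Iic)
      ((integrableOn_exp_mul_complex_Ioi hpos 0).congr_fun hIoi measurableSet_Ioi),
    ← setIntegral_congr_fun measurableSet_Iic hIic, ← setIntegral_congr_fun measurableSet_Ioi hIoi,
    integral_exp_mul_complex_Iic hneg, integral_exp_mul_complex_Ioi hpos, hfactor]
  simp only [ofReal_zero, mul_zero, Complex.exp_zero]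
  field_simp
  ring

theorem fourier_comp_norm_eq_of_norm_eq {V F : Type*} [NormedAddCommGroup V]
    [InnerProductSpace ℝ V] [FiniteDimensional ℝ V] [MeasurableSpace V] [BorelSpace V]
    [NormedAddCommGroup F] [NormedSpace ℂ F] (f : ℝ → F) {ξ η : V} (h : ‖ξ‖ = ‖η‖) :
    𝓕 (fun v : V ↦ f ‖v‖) ξ = 𝓕 (fun v : V ↦ f ‖v‖) η := by
  have hcomp : (fun v : V ↦ f ‖v‖) ∘ (ℝ ∙ (ξ - η))ᗮ.reflection = fun v ↦ f ‖v‖ := by ext; simp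
  rw [← Submodule.reflection_sub h, ← Real.fourier_comp_linearIsometry, hcomp]

theorem integral_fun_norm_euclideanSpace_fin_two {F : Type*} [NormedAddCommGroup F]
    [NormedSpace ℝ F] (f : ℝ → F) :
    ∫ p : EuclideanSpace ℝ (Fin 2), f ‖p‖ = (2 * π) • ∫ r in Ioi (0 : ℝ), r • f r := by
  rw [integral_fun_norm_addHaar volume f, finrank_euclideanSpace_fin, measureReal_def,
    EuclideanSpace.volume_ball_fin_two]
  simp [← Nat.cast_smul_eq_nsmul ℝ, smul_smul, ENNReal.toReal_ofReal Real.pi_nonneg]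

variable {n : ℕ}

/-- The measurable identification of `ℝ × ℝⁿ` with `ℝⁿ⁺¹` used to slice integrals over `ℝⁿ⁺¹` by
hyperplanes; the scalar becomes the coordinate of index `0`. -/
noncomputable def euclideanCons (n : ℕ) :
    ℝ × EuclideanSpace ℝ (Fin n) ≃ᵐ EuclideanSpace ℝ (Fin (n + 1)) :=
  ((MeasurableEquiv.refl ℝ).prodCongr (MeasurableEquiv.toLp 2 (Fin n → ℝ)).symm).trans
    ((MeasurableEquiv.piFinSuccAbove (fun _ ↦ ℝ) 0).symm.trans (MeasurableEquiv.toLp 2 _))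

theorem euclideanCons_zero (z : ℝ) (p : EuclideanSpace ℝ (Fin n)) :
    euclideanCons n (z, p) 0 = z := rfl

theorem norm_euclideanCons (z : ℝ) (p : EuclideanSpace ℝ (Fin n)) :
    ‖euclideanCons n (z, p)‖ = √(z ^ 2 + ‖p‖ ^ 2) := by
  have hsucc (i : Fin n) : euclideanCons n (z, p) i.succ = p i := rfl
  rw [EuclideanSpace.norm_eq, EuclideanSpace.norm_sq_eq, Fin.sum_univ_succ]
  simp [hsucc, euclideanCons_zero]

theorem measurePreserving_euclideanCons : MeasurePreserving (euclideanCons n) :=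
  (PiLp.volume_preserving_toLp _).comp <|
    (volume_preserving_piFinSuccAbove (fun _ ↦ ℝ) 0).symm.comp <|
      (MeasurePreserving.id volume).prod (PiLp.volume_preserving_ofLp _)

theorem fourier_single_eq_fourier_integral_euclideanCons {F : Type*} [NormedAddCommGroup F]
    [NormedSpace ℂ F] {f : EuclideanSpace ℝ (Fin (n + 1)) → F} (hf : Integrable f) (k : ℝ) :
    𝓕 f (EuclideanSpace.single 0 k) = 𝓕 (fun z ↦ ∫ p, f (euclideanCons n (z, p))) k := by
  have hmp := measurePreserving_euclideanCons (n := n)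
  have hint : Integrable fun q ↦
      𝐞 (-⟪euclideanCons n q, EuclideanSpace.single 0 k⟫) • f (euclideanCons n q) :=
    hmp.integrable_comp_of_integrable ((Real.fourierIntegral_convergent_iff _).2 hf)
  rw [Real.fourier_eq, Real.fourier_real_eq,
    ← hmp.integral_comp (euclideanCons n).measurableEmbedding, Measure.volume_eq_prod,
    integral_prod _ hint]
  simp [EuclideanSpace.inner_single_right, euclideanCons_zero, Circle.smul_def, integral_smul,
    mul_comm k]

end Fourier

section GreenFunction

variable {ζ : ℂ}

/-- The radial profile of the Green kernel: `greenK ζ v = greenProfile ζ ‖v‖`. -/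
noncomputable def greenProfile (ζ : ℂ) (r : ℝ) : ℂ :=
  cexp (I * ζ * r) / (4 * π * r : ℝ)

theorem greenK_eq_greenProfile (ζ : ℂ) : greenK ζ = fun v ↦ greenProfile ζ ‖v‖ := rfl

theorem greenK_even (ζ : ℂ) : (greenK ζ).Even := fun v ↦ by
  simp only [greenK_eq_greenProfile, norm_neg]

theorem norm_mul_greenProfile_le (hζ : 0 ≤ ζ.im) {r s : ℝ} (hr : 0 ≤ r) (hrs : r ≤ s) :
    ‖r * greenProfile ζ s‖ ≤ Real.exp (-ζ.im * r) := by
  have hs : 0 ≤ s := hr.trans hrs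
  have hexp : ‖cexp (I * ζ * s)‖ ≤ Real.exp (-ζ.im * r) := by
    simpa [Complex.norm_exp] using mul_le_mul_of_nonneg_left hrs hζ
  have hratio : r / (4 * π * s) ≤ 1 :=
    div_le_one_of_le₀ (by nlinarith [Real.pi_gt_three]) (by positivity)
  calc ‖r * greenProfile ζ s‖ = r / (4 * π * s) * ‖cexp (I * ζ * s)‖ := by
        rw [greenProfile, norm_mul, norm_div, norm_real, norm_real,
          Real.norm_of_nonneg hr, Real.norm_of_nonneg (by positivity)]
        ring
    _ ≤ 1 * Real.exp (-ζ.im * r) := by gcongr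
    _ = Real.exp (-ζ.im * r) := one_mul _

theorem integrable_greenK (hζ : 0 < ζ.im) : Integrable (greenK ζ) := by
  have hdom : IntegrableOn (fun r : ℝ ↦ r * Real.exp (-ζ.im * r)) (Ioi 0) := by
    simpa using integrableOn_rpow_mul_exp_neg_mul_rpow (p := 1) (s := 1) (by norm_num) one_pos hζ
  rw [greenK_eq_greenProfile, integrable_fun_norm_addHaar, finrank_euclideanSpace_fin]
  refine hdom.mono' (by unfold greenProfile; fun_prop) ?_
  filter_upwards [ae_restrict_mem measurableSet_Ioi] with r hr
  calc ‖r ^ (3 - 1) • greenProfile ζ r‖ = r * ‖r * greenProfile ζ r‖ := by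
        rw [norm_smul, norm_mul, norm_real, norm_pow, Real.norm_of_nonneg (mem_Ioi.1 hr).le]
        ring
    _ ≤ r * Real.exp (-ζ.im * r) :=
        mul_le_mul_of_nonneg_left (norm_mul_greenProfile_le hζ.le (mem_Ioi.1 hr).le le_rfl)
          (mem_Ioi.1 hr).le

theorem hasDerivAt_cexp_sqrt_sq_add_sq (ζ : ℂ) {z : ℝ} (hz : z ≠ 0) (r : ℝ) :
    HasDerivAt (fun r : ℝ ↦ cexp (I * ζ * √(z ^ 2 + r ^ 2)))
      (4 * π * I * ζ * (r * greenProfile ζ √(z ^ 2 + r ^ 2))) r := by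
  have hpos : 0 < z ^ 2 + r ^ 2 := by positivity
  have hsqrt : HasDerivAt (fun r : ℝ ↦ √(z ^ 2 + r ^ 2)) (r / √(z ^ 2 + r ^ 2)) r :=
    (((hasDerivAt_pow 2 r).const_add (z ^ 2)).sqrt hpos.ne').congr_deriv (by field_simp; norm_num)
  refine (hsqrt.ofReal_comp.const_mul (I * ζ)).cexp.congr_deriv ?_
  have hs : (√(z ^ 2 + r ^ 2) : ℂ) ≠ 0 := ofReal_ne_zero.2 (Real.sqrt_pos.2 hpos).ne'
  have hπ : (π : ℂ) ≠ 0 := ofReal_ne_zero.2 Real.pi_ne_zero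
  rw [greenProfile]
  push_cast
  field_simp

theorem le_sqrt_sq_add_sq (z r : ℝ) : r ≤ √(z ^ 2 + r ^ 2) :=
  Real.le_sqrt_of_sq_le (le_add_of_nonneg_left (sq_nonneg z))

theorem tendsto_cexp_sqrt_sq_add_sq (hζ : 0 < ζ.im) (z : ℝ) :
    Tendsto (fun r : ℝ ↦ cexp (I * ζ * √(z ^ 2 + r ^ 2))) atTop (𝓝 0) := by
  have hsqrt : Tendsto (fun r : ℝ ↦ √(z ^ 2 + r ^ 2)) atTop atTop :=
    tendsto_atTop_mono (le_sqrt_sq_add_sq z) tendsto_id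
  rw [tendsto_zero_iff_norm_tendsto_zero]
  simpa [Complex.norm_exp] using hsqrt.const_mul_atTop hζ

theorem integral_Ioi_mul_greenProfile_sqrt (hζ : 0 < ζ.im) {z : ℝ} (hz : z ≠ 0) :
    ∫ r in Ioi (0 : ℝ), r * greenProfile ζ √(z ^ 2 + r ^ 2) =
      I / (4 * π * ζ) * cexp (I * ζ * |z|) := by
  have hζ₀ : ζ ≠ 0 := fun h ↦ by simp [h] at hζ
  have hπ : (π : ℂ) ≠ 0 := ofReal_ne_zero.2 Real.pi_ne_zero
  have hint : IntegrableOn (fun r : ℝ ↦ r * greenProfile ζ √(z ^ 2 + r ^ 2)) (Ioi 0) := by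
    refine (integrableOn_exp_mul_Ioi (neg_lt_zero.2 hζ) 0).mono'
      (by unfold greenProfile; fun_prop) ?_
    filter_upwards [ae_restrict_mem measurableSet_Ioi] with r hr using
      norm_mul_greenProfile_le hζ.le (mem_Ioi.1 hr).le (le_sqrt_sq_add_sq z r)
  have hftc := integral_Ioi_of_hasDerivAt_of_tendsto'
    (fun r _ ↦ hasDerivAt_cexp_sqrt_sq_add_sq ζ hz r) (hint.const_mul (4 * π * I * ζ))
    (tendsto_cexp_sqrt_sq_add_sq hζ z)
  simp only [integral_const_mul, ne_eq, OfNat.ofNat_ne_zero, not_false_eq_true, zero_pow,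
    add_zero, Real.sqrt_sq_eq_abs, zero_sub] at hftc
  generalize (∫ r in Ioi (0 : ℝ), r * greenProfile ζ √(z ^ 2 + r ^ 2)) = J at hftc ⊢
  field_simp
  linear_combination -I * hftc + 4 * π * ζ * J * I_sq

theorem integral_greenProfile_sqrt (hζ : 0 < ζ.im) {z : ℝ} (hz : z ≠ 0) :
    ∫ p : EuclideanSpace ℝ (Fin 2), greenProfile ζ √(z ^ 2 + ‖p‖ ^ 2) =
      I / (2 * ζ) * cexp (I * ζ * |z|) := by
  have hπ : (π : ℂ) ≠ 0 := ofReal_ne_zero.2 Real.pi_ne_zero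
  rw [integral_fun_norm_euclideanSpace_fin_two fun r ↦ greenProfile ζ √(z ^ 2 + r ^ 2)]
  simp only [real_smul, integral_Ioi_mul_greenProfile_sqrt hζ hz]
  push_cast
  field_simp
  ring

theorem fourier_greenK_single (hζ : 0 < ζ.im) (k : ℝ) :
    𝓕 (greenK ζ) (EuclideanSpace.single 0 k) = 1 / (4 * π ^ 2 * k ^ 2 - ζ ^ 2) := by
  have hζ₀ : ζ ≠ 0 := fun h ↦ by simp [h] at hζ
  have hre : 0 < (-(I * ζ)).re := by simpa using hζ
  have hslice : (fun z ↦ ∫ p, greenK ζ (euclideanCons 2 (z, p))) =ᵐ[volume]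
      (I / (2 * ζ)) • fun z : ℝ ↦ cexp (-(-(I * ζ)) * |z|) := by
    filter_upwards [compl_mem_ae_iff.2 (measure_singleton 0)] with z hz
    simpa [greenK_eq_greenProfile, norm_euclideanCons] using integral_greenProfile_sqrt hζ hz
  rw [fourier_single_eq_fourier_integral_euclideanCons (integrable_greenK hζ),
    Real.fourier_congr_ae hslice]
  calc 𝓕 ((I / (2 * ζ)) • fun z : ℝ ↦ cexp (-(-(I * ζ)) * |z|)) k
      = (I / (2 * ζ)) * 𝓕 (fun z : ℝ ↦ cexp (-(-(I * ζ)) * |z|)) k :=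
        congrFun (VectorFourier.fourierIntegral_const_smul 𝐞 volume (innerₗ ℝ) _ _) k
    _ = 1 / (4 * π ^ 2 * k ^ 2 - ζ ^ 2) := by
        rw [fourier_exp_neg_mul_abs hre, neg_sq, mul_pow, I_sq, neg_one_mul, neg_add_eq_sub]
        field_simp
        rw [I_sq]
        ring

/-- The symbol `4π²|ξ|² - ζ²` of the Helmholtz operator `-Δ - ζ²`, for the Fourier transform with
phase `e^{-2πi⟨x, ξ⟩}`. -/
noncomputable def helmholtzSymbol {V : Type*} [NormedAddCommGroup V] (ζ : ℂ) (ξ : V) : ℂ :=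
  4 * π ^ 2 * (‖ξ‖ ^ 2 : ℝ) - ζ ^ 2

theorem hasTemperateGrowth_helmholtzSymbol {V : Type*} [NormedAddCommGroup V]
    [InnerProductSpace ℝ V] (ζ : ℂ) :
    (helmholtzSymbol ζ : V → ℂ).HasTemperateGrowth := by
  unfold helmholtzSymbol
  fun_prop

theorem helmholtzSymbol_ne_zero {V : Type*} [NormedAddCommGroup V] (hζ : 0 < ζ.im) (ξ : V) :
    helmholtzSymbol ζ ξ ≠ 0 := by
  have hfactor : helmholtzSymbol ζ ξ = (2 * π * ‖ξ‖ - ζ) * (2 * π * ‖ξ‖ + ζ) := by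
    rw [helmholtzSymbol]
    push_cast
    ring
  rw [hfactor]
  exact mul_ne_zero (ne_of_apply_ne Complex.im (by simp [hζ.ne']))
    (ne_of_apply_ne Complex.im (by simp [hζ.ne']))

theorem fourier_greenK (hζ : 0 < ζ.im) (ξ : EuclideanSpace ℝ (Fin 3)) :
    𝓕 (greenK ζ) ξ = (helmholtzSymbol ζ ξ)⁻¹ := by
  have hrot : 𝓕 (greenK ζ) ξ = 𝓕 (greenK ζ) (EuclideanSpace.single 0 ‖ξ‖) :=
    fourier_comp_norm_eq_of_norm_eq (greenProfile ζ) (by simp)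
  rw [hrot, fourier_greenK_single hζ, helmholtzSymbol]
  simp

end GreenFunction

theorem stmt12_general {ι : Type*} [Countable ι] (ζ : ℂ) (hζ : 0 < ζ.im)
    (x : ι → EuclideanSpace ℝ (Fin 3)) (c : ι → ℂ) (hc : Summable fun n ↦ ‖c n‖)
    {p : ℝ≥0∞} (hp : 1 ≤ p) {w : EuclideanSpace ℝ (Fin 3) → ℂ} (hw : MemLp w p)
    (heq : ∀ᵐ a, ∫ y, greenK ζ (a - y) * w y = ∑' n, c n * greenK ζ (a - x n)) :
    (∀ᵐ y, w y = 0) ∧ ∀ b, ∑' n : x ⁻¹' {b}, c n = 0 := by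
  refine ae_eq_zero_and_tsum_fiber_eq_zero_of_convolution (integrable_greenK hζ) (greenK_even ζ)
    (hasTemperateGrowth_helmholtzSymbol ζ) (fun ξ ↦ ?_) hp hw hc heq
  rw [fourier_greenK hζ, inv_mul_cancel₀ (helmholtzSymbol_ne_zero hζ ξ)]

/-- Let `Im ζ > 0`, let `x_n ∈ ℝ³` be pairwise distinct points whose
closure has Lebesgue measure zero, and let `Σ|c_n| < ∞`.  If `w ∈ L²(ℝ³)` satisfies, for
almost every `x`, `∫ (e^{iζ|x-y|}/(4π|x-y|)) w(y) dy = Σ_n c_n e^{iζ|x-x_n|}/(4π|x-x_n|)`,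
then `w = 0` almost everywhere, and consequently the right-hand side vanishes identically. -/
theorem stmt12 (ζ : ℂ) (hζ : 0 < ζ.im)
    (x : ℤ → EuclideanSpace ℝ (Fin 3)) (hx : Function.Injective x)
    (hcl : volume (closure (Set.range x)) = 0)
    (c : ℤ → ℂ) (hc : Summable fun n : ℤ => ‖c n‖)
    (w : Lp ℂ 2 (volume : Measure (EuclideanSpace ℝ (Fin 3))))
    (heq : ∀ᵐ xx : EuclideanSpace ℝ (Fin 3),
      (∫ y : EuclideanSpace ℝ (Fin 3),
          greenK ζ (xx - y) * (w : EuclideanSpace ℝ (Fin 3) → ℂ) y)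
        = ∑' n : ℤ, c n * greenK ζ (xx - x n)) :
    (∀ᵐ xx : EuclideanSpace ℝ (Fin 3), (w : EuclideanSpace ℝ (Fin 3) → ℂ) xx = 0) ∧
    ∀ xx : EuclideanSpace ℝ (Fin 3), ∑' n : ℤ, c n * greenK ζ (xx - x n) = 0 := by
  obtain ⟨hw, hfiber⟩ := stmt12_general ζ hζ x c hc one_le_two (Lp.memLp w) heq
  have hpre (n : ℤ) : x ⁻¹' {x n} = {n} := by rw [← image_singleton, hx.preimage_image]
  have hc₀ (n : ℤ) : c n = 0 := by rw [← tsum_singleton n c, ← hpre, hfiber]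
  exact ⟨hw, fun a ↦ by simp [hc₀]⟩
end

section
/- Let 𝒩 be a complex Hilbert space, let g_1, …, g_N ∈ 𝒩 (N < ∞) be linearly independent, let Υ = (Υ_{jk})_{j,k=1}^N be the Gram matrix Υ_{jk} = (g_j, g_k), and let Λ be an N×N Hermitian complex matrix such that Λ + iΥ is invertible. Then the bounded operator Ω on 𝒩 defined by Ω h = h − 2i·Σ_{j,k=1}^N ((Λ + iΥ)^{−1})_{jk} · (h, g_j) · g_k is unitary: Ω*Ω = ΩΩ* = I. -/
open Complex ContinuousLinearMap

/-!
Let `G : ℂᴺ → 𝒩` send the `k`-th basis vector to `g k`, so that `G†G` is the Gram operator. Then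
`Ω = 1 - G A⁻¹ G†`, where `A` is `(Λ + iΥ) / 2i` transposed. As `Λ` is Hermitian, `A + A† = G†G`,
and therefore `A⁻¹ + A⁻¹† = A⁻¹† (G†G) A⁻¹ = A⁻¹ (G†G) A⁻¹†`. In `Ω†Ω` and `ΩΩ†`
these identities cancel the terms linear in `A⁻¹` and `A⁻¹†` against the mixed term.
-/

open Matrix

section StarRing

variable {R : Type*} [Semiring R] [StarRing R]

theorem units_inv_add_star_inv_eq_star_inv_mul_mul_inv (a : Rˣ) :
    (↑a⁻¹ : R) + star ↑a⁻¹ = star ↑a⁻¹ * (a + star (a : R)) * ↑a⁻¹ := by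
  have star_inv_mul : star (↑a⁻¹ : R) * star (a : R) = 1 := by
    rw [← star_mul, a.mul_inv, star_one]
  rw [mul_add, add_mul, mul_assoc, a.mul_inv, mul_one, star_inv_mul, one_mul, add_comm]

theorem units_inv_add_star_inv_eq_inv_mul_mul_star_inv (a : Rˣ) :
    (↑a⁻¹ : R) + star ↑a⁻¹ = ↑a⁻¹ * (a + star (a : R)) * star ↑a⁻¹ := by
  simpa [add_comm] using units_inv_add_star_inv_eq_star_inv_mul_mul_inv (star a)

end StarRing

section Operator

theorem one_sub_comp_mul_one_sub_comp_eq_one {R E F : Type*} [Ring R]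
    [AddCommGroup E] [TopologicalSpace E] [IsTopologicalAddGroup E] [Module R E]
    [AddCommMonoid F] [TopologicalSpace F] [ContinuousAdd F] [Module R F]
    (G : F →L[R] E) (H : E →L[R] F) {B C : F →L[R] F} (hBC : B + C = C * (H ∘L G) * B) :
    (1 - G ∘L C ∘L H) * (1 - G ∘L B ∘L H) = 1 := by
  have cross_term : (G ∘L C ∘L H) * (G ∘L B ∘L H) = G ∘L B ∘L H + G ∘L C ∘L H :=
    calc (G ∘L C ∘L H) * (G ∘L B ∘L H) = G ∘L (C * (H ∘L G) * B) ∘L H := rfl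
      _ = G ∘L B ∘L H + G ∘L C ∘L H := by rw [← hBC, add_comp, comp_add]
  rw [sub_mul, one_mul, mul_sub, mul_one, cross_term]
  abel

variable {𝕜 E F : Type*} [RCLike 𝕜]
  [NormedAddCommGroup E] [InnerProductSpace 𝕜 E] [CompleteSpace E]
  [NormedAddCommGroup F] [InnerProductSpace 𝕜 F] [CompleteSpace F]

theorem star_one_sub_comp_comp_adjoint (G : F →L[𝕜] E) (B : F →L[𝕜] F) :
    star (1 - G ∘L B ∘L adjoint G) = 1 - G ∘L star B ∘L adjoint G := by
  rw [star_sub, star_one, star_eq_adjoint, star_eq_adjoint, adjoint_comp, adjoint_comp,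
    adjoint_adjoint, comp_assoc]

theorem one_sub_comp_inv_comp_adjoint_mem_unitary {G : F →L[𝕜] E} {A : (F →L[𝕜] F)ˣ}
    (hA : (A : F →L[𝕜] F) + star (A : F →L[𝕜] F) = adjoint G ∘L G) :
    1 - G ∘L (↑A⁻¹ : F →L[𝕜] F) ∘L adjoint G ∈ unitary (E →L[𝕜] E) := by
  rw [Unitary.mem_iff, star_one_sub_comp_comp_adjoint]
  constructor <;> apply one_sub_comp_mul_one_sub_comp_eq_one
  · rw [← hA, units_inv_add_star_inv_eq_star_inv_mul_mul_inv]
  · rw [← hA, add_comm, units_inv_add_star_inv_eq_inv_mul_mul_star_inv]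

end Operator

section Synthesis

variable {𝕜 E ι : Type*} [RCLike 𝕜] [NormedAddCommGroup E] [InnerProductSpace 𝕜 E] [Fintype ι]

variable (𝕜) in
/-- The synthesis operator `x ↦ ∑ k, x k • g k` of a finite family `g`. Its domain carries the
Euclidean norm, so that its adjoint is the analysis operator `h ↦ (⟪g k, h⟫)ₖ`. -/
noncomputable def synthesis (g : ι → E) : EuclideanSpace 𝕜 ι →L[𝕜] E :=
  ∑ k, (EuclideanSpace.proj k).smulRight (g k)

theorem synthesis_apply (g : ι → E) (x : EuclideanSpace 𝕜 ι) :
    synthesis 𝕜 g x = ∑ k, x k • g k := by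
  simp [synthesis]

theorem synthesis_single [DecidableEq ι] (g : ι → E) (k : ι) :
    synthesis 𝕜 g (EuclideanSpace.single k 1) = g k := by
  simp [synthesis_apply]

variable [CompleteSpace E]

theorem adjoint_synthesis_apply (g : ι → E) (h : E) (k : ι) :
    adjoint (synthesis 𝕜 g) h k = inner 𝕜 (g k) h := by
  classical
  rw [← synthesis_single (𝕜 := 𝕜) g k, ← adjoint_inner_right, EuclideanSpace.inner_single_left,
    map_one, one_mul]

variable [DecidableEq ι]

theorem adjoint_synthesis_comp_synthesis (g : ι → E) :
    adjoint (synthesis 𝕜 g) ∘L synthesis 𝕜 g = toEuclideanCLM (𝕜 := 𝕜) (gram 𝕜 g) := by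
  ext x k
  simp only [coe_comp, Function.comp_apply, adjoint_synthesis_apply, synthesis_apply, inner_sum,
    inner_smul_right, ofLp_toEuclideanCLM, mulVec, dotProduct, gram_apply, mul_comm]

theorem one_sub_synthesis_comp_inv_comp_adjoint_mem_unitary {g : ι → E} {A : Matrix ι ι 𝕜}
    (hunit : IsUnit A) (hA : A + Aᴴ = gram 𝕜 g) :
    1 - synthesis 𝕜 g ∘L toEuclideanCLM (𝕜 := 𝕜) A⁻¹ ∘L adjoint (synthesis 𝕜 g) ∈
      unitary (E →L[𝕜] E) := by
  obtain ⟨u, rfl⟩ := hunit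
  let T := Units.map (MonoidHomClass.toMonoidHom (toEuclideanCLM (n := ι) (𝕜 := 𝕜))) u
  have T_add_star : (T : EuclideanSpace 𝕜 ι →L[𝕜] EuclideanSpace 𝕜 ι) + star ↑T =
      adjoint (synthesis 𝕜 g) ∘L synthesis 𝕜 g := by
    rw [adjoint_synthesis_comp_synthesis, ← hA, map_add, ← star_eq_conjTranspose, map_star]
    simp [T]
  simpa [T] using one_sub_comp_inv_comp_adjoint_mem_unitary T_add_star

theorem synthesis_toEuclideanCLM_adjoint_apply (g : ι → E) (M : Matrix ι ι 𝕜) (h : E) :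
    synthesis 𝕜 g (toEuclideanCLM (𝕜 := 𝕜) Mᵀ (adjoint (synthesis 𝕜 g) h)) =
      ∑ j, ∑ k, (M j k * inner 𝕜 (g j) h) • g k := by
  rw [Finset.sum_comm]
  simp [synthesis_apply, mulVec, dotProduct, adjoint_synthesis_apply, Finset.sum_smul]

end Synthesis

theorem inv_two_I_smul_add_conjTranspose {ι : Type*} {Λ Υ : Matrix ι ι ℂ} (hΛ : Λ.IsHermitian)
    (hΥ : Υ.IsHermitian) :
    (2 * I)⁻¹ • (Λ + I • Υ) + ((2 * I)⁻¹ • (Λ + I • Υ))ᴴ = Υ := by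
  have star_coeff : star (2 * I)⁻¹ = -(2 * I)⁻¹ := by simp
  have conjTranspose_sum : (Λ + I • Υ)ᴴ = Λ - I • Υ := by
    simp [hΛ.eq, hΥ.eq, sub_eq_add_neg]
  calc (2 * I)⁻¹ • (Λ + I • Υ) + ((2 * I)⁻¹ • (Λ + I • Υ))ᴴ
      = (2 * I)⁻¹ • (Λ + I • Υ) + -(2 * I)⁻¹ • (Λ - I • Υ) := by
        rw [conjTranspose_smul, star_coeff, conjTranspose_sum]
    _ = (2 * I)⁻¹ • (2 * I) • Υ := by module
    _ = Υ := inv_smul_smul₀ (by simp) Υ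

theorem stmt15_general {𝒩 ι : Type*} [NormedAddCommGroup 𝒩] [InnerProductSpace ℂ 𝒩]
    [CompleteSpace 𝒩] [Fintype ι] [DecidableEq ι] (g : ι → 𝒩)
    {Υ : Matrix ι ι ℂ} (hΥ : ∀ j k, Υ j k = (inner ℂ (g k) (g j) : ℂ))
    {Λ : Matrix ι ι ℂ} (hΛ : Λ.IsHermitian) (hinv : IsUnit (Λ + I • Υ)) {Ω : 𝒩 →L[ℂ] 𝒩}
    (hΩ : ∀ h : 𝒩, Ω h = h - (2 * I) •
      ∑ j, ∑ k, ((Λ + I • Υ)⁻¹ j k * (inner ℂ (g j) h : ℂ)) • g k) :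
    adjoint Ω ∘L Ω = 1 ∧ Ω ∘L adjoint Ω = 1 := by
  let K := Λ + I • Υ
  let c : ℂˣ := Units.mk0 (2 * I) (by simp)
  let A := c⁻¹ • Kᵀ
  have isUnit_transpose_K : IsUnit Kᵀ := (isUnit_transpose K).mpr hinv
  have inv_A : A⁻¹ = (2 * I) • (K⁻¹)ᵀ := by
    rw [inv_smul' _ _ ((isUnit_iff_isUnit_det _).mp isUnit_transpose_K), inv_inv,
      transpose_nonsing_inv]
    rfl
  have transpose_Υ : Υᵀ = gram ℂ g := Matrix.ext fun j k ↦ hΥ k j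
  have transpose_K : Kᵀ = Λᵀ + I • gram ℂ g := by
    rw [transpose_add, transpose_smul, transpose_Υ]
  have A_add_star : A + Aᴴ = gram ℂ g := by
    have := inv_two_I_smul_add_conjTranspose hΛ.transpose (isHermitian_gram ℂ g)
    rwa [← transpose_K] at this
  have Ω_eq : Ω = 1 - synthesis ℂ g ∘L toEuclideanCLM (𝕜 := ℂ) A⁻¹ ∘L adjoint (synthesis ℂ g) := by
    ext h
    simp [hΩ, inv_A, synthesis_toEuclideanCLM_adjoint_apply, K]
  rw [Ω_eq]
  exact one_sub_synthesis_comp_inv_comp_adjoint_mem_unitary (isUnit_transpose_K.smul c⁻¹) A_add_star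

/-- Proposition 3.2 of the paper. Let `g₁, …, g_N` be linearly
independent vectors of a complex Hilbert space `𝒩`, `Υ` the Gram matrix
`Υ_{jk} = (g_j, g_k)` (inner product linear in the *first* argument, i.e. `⟪g k, g j⟫` in
Mathlib's convention), and `Λ` a Hermitian `N×N` matrix with `Λ + iΥ` invertible.  Then the
bounded operator `Ω h = h - 2i Σ_{j,k} ((Λ + iΥ)⁻¹)_{jk} (h, g_j) g_k` is unitary:
`Ω*Ω = ΩΩ* = I`. -/
theorem stmt15 {𝒩 : Type*} [NormedAddCommGroup 𝒩] [InnerProductSpace ℂ 𝒩]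
    [CompleteSpace 𝒩] (N : ℕ) (g : Fin N → 𝒩) (hg : LinearIndependent ℂ g)
    (Υ : Matrix (Fin N) (Fin N) ℂ) (hΥ : ∀ j k, Υ j k = (inner ℂ (g k) (g j) : ℂ))
    (Λ : Matrix (Fin N) (Fin N) ℂ) (hΛ : Λ.IsHermitian)
    (hinv : IsUnit (Λ + Complex.I • Υ))
    (Ω : 𝒩 →L[ℂ] 𝒩)
    (hΩ : ∀ h : 𝒩, Ω h = h - (2 * Complex.I) •
      ∑ j : Fin N, ∑ k : Fin N,
        ((Λ + Complex.I • Υ)⁻¹ j k * (inner ℂ (g j) h : ℂ)) • g k) :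
    adjoint Ω ∘L Ω = 1 ∧ Ω ∘L adjoint Ω = 1 := by
  exact stmt15_general g hΥ hΛ hinv hΩ
end

section
/- Let 𝒩 be a complex Hilbert space, let q_1, …, q_N ∈ 𝒩, let Υ = (Υ_{jk})_{j,k=1}^N be the Gram matrix Υ_{jk} = (q_j, q_k), and let Λ be an N×N Hermitian complex matrix such that Λ + iΥ is invertible. Define the bounded operator S on 𝒩 by S h = h − 2i·Σ_{j,k=1}^N ((Λ + iΥ)^{−1})_{jk} · (h, q_j) · q_k. Then for every s ∈ {1, …, N}, S q_s = Σ_{j=1}^N ((Λ − iΥ)·(Λ + iΥ)^{−1})_{sj} · q_j. -/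
open Complex ContinuousLinearMap

/-!
Coefficient rows act on the family `q` through the linear map `v ↦ ∑ k, v k • q k`. On the vector
`q s` the inner products `(q s, q j)` form the row `s` of `Υ`, so `S (q s)` is the combination with
coefficients the row `s` of `1 - 2i Υ (Λ + iΥ)⁻¹`. Since `Λ - iΥ = (Λ + iΥ) - 2i Υ`, this matrix is
`(Λ - iΥ)(Λ + iΥ)⁻¹`.
-/

open Matrix

theorem linearCombination_vecMul {R M ι κ : Type*} [Semiring R] [AddCommMonoid M] [Module R M]
    [Fintype ι] [Fintype κ] (q : κ → M) (v : ι → R) (B : Matrix ι κ R) :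
    Fintype.linearCombination R q (v ᵥ* B) = ∑ j, ∑ k, (v j * B j k) • q k := by
  simp only [Fintype.linearCombination_apply, vecMul, dotProduct, Finset.sum_smul]
  exact Finset.sum_comm

theorem linearCombination_one_row {R M ι : Type*} [Semiring R] [AddCommMonoid M] [Module R M]
    [Fintype ι] [DecidableEq ι] (q : ι → M) (s : ι) :
    Fintype.linearCombination R q ((1 : Matrix ι ι R) s) = q s := by
  simp [Fintype.linearCombination_apply, one_apply]

theorem sub_smul_mul_inv_add_smul {R ι : Type*} [CommRing R] [Fintype ι] [DecidableEq ι]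
    {Λ Υ : Matrix ι ι R} {c : R} (hinv : IsUnit (Λ + c • Υ)) :
    (Λ - c • Υ) * (Λ + c • Υ)⁻¹ = 1 - (2 * c) • (Υ * (Λ + c • Υ)⁻¹) := by
  have hdiff : Λ - c • Υ = (Λ + c • Υ) - (2 * c) • Υ := by module
  have hcancel : (Λ + c • Υ) * (Λ + c • Υ)⁻¹ = 1 :=
    mul_nonsing_inv _ ((isUnit_iff_isUnit_det _).mp hinv)
  rw [hdiff, sub_mul, hcancel, smul_mul]

theorem stmt16_general {R M ι : Type*} [CommRing R] [AddCommGroup M] [Module R M]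
    [Fintype ι] [DecidableEq ι] (q : ι → M) (f : ι → M → R)
    (Υ : Matrix ι ι R) (hΥ : ∀ j k, Υ j k = f k (q j)) (Λ : Matrix ι ι R) (c : R)
    (hinv : IsUnit (Λ + c • Υ)) (S : M → M)
    (hS : ∀ h, S h = h - (2 * c) • ∑ j, ∑ k, ((Λ + c • Υ)⁻¹ j k * f j h) • q k) (s : ι) :
    S (q s) = ∑ j, ((Λ - c • Υ) * (Λ + c • Υ)⁻¹) s j • q j := by
  set A := Λ + c • Υ
  let L := Fintype.linearCombination R q
  have hsum : ∑ j, ∑ k, (A⁻¹ j k * f j (q s)) • q k = L ((Υ * A⁻¹) s) := by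
    simp only [L, mul_apply_eq_vecMul, linearCombination_vecMul, hΥ, mul_comm]
  calc
    S (q s) = L ((1 : Matrix ι ι R) s) - (2 * c) • L ((Υ * A⁻¹) s) := by
      rw [hS, hsum, linearCombination_one_row]
    _ = L ((1 - (2 * c) • (Υ * A⁻¹)) s) := by
      rw [← map_smul, ← map_sub]; rfl
    _ = ∑ j, ((Λ - c • Υ) * A⁻¹) s j • q j := by
      rw [← sub_smul_mul_inv_add_smul hinv, Fintype.linearCombination_apply]

/-- Let `q₁, …, q_N` be vectors of a complex Hilbert space `𝒩`, `Υ` their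
Gram matrix `Υ_{jk} = (q_j, q_k)` (inner product linear in the *first* argument, i.e.
`⟪q k, q j⟫` in Mathlib's convention), and `Λ` a Hermitian matrix with `Λ + iΥ` invertible.
For the operator `S h = h - 2i Σ_{j,k} ((Λ + iΥ)⁻¹)_{jk} (h, q_j) q_k` one has
`S q_s = Σ_j ((Λ - iΥ)(Λ + iΥ)⁻¹)_{sj} q_j` for every `s`. -/
theorem stmt16 {𝒩 : Type*} [NormedAddCommGroup 𝒩] [InnerProductSpace ℂ 𝒩]
    [CompleteSpace 𝒩] (N : ℕ) (q : Fin N → 𝒩)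
    (Υ : Matrix (Fin N) (Fin N) ℂ) (hΥ : ∀ j k, Υ j k = (inner ℂ (q k) (q j) : ℂ))
    (Λ : Matrix (Fin N) (Fin N) ℂ) (hΛ : Λ.IsHermitian)
    (hinv : IsUnit (Λ + Complex.I • Υ))
    (S : 𝒩 →L[ℂ] 𝒩)
    (hS : ∀ h : 𝒩, S h = h - (2 * Complex.I) •
      ∑ j : Fin N, ∑ k : Fin N,
        ((Λ + Complex.I • Υ)⁻¹ j k * (inner ℂ (q j) h : ℂ)) • q k) :
    ∀ s : Fin N, S (q s) =
      ∑ j : Fin N, (((Λ - Complex.I • Υ) * (Λ + Complex.I • Υ)⁻¹) s j) • q j :=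
  stmt16_general q (fun j h => inner ℂ (q j) h) Υ hΥ Λ I hinv S hS
end

section
/- Let 𝒩 be a complex Hilbert space and q_1, …, q_{N+1} ∈ 𝒩. Let Λ₊ be an (N+1)×(N+1) complex matrix that is Hermitian and symmetric, with upper-left N×N block Λ; let Υ₊ be the Gram matrix (Υ₊)_{jk} = (q_j, q_k), assume Υ₊ is symmetric (i.e. (q_j, q_k) = (q_k, q_j) for all j, k), and let Υ be its upper-left N×N block. Assume W := Λ + iΥ and W₊ := Λ₊ + iΥ₊ are invertible. Define bounded operators on 𝒩 by S h = h − 2i·Σ_{j,k=1}^N (W^{−1})_{jk}·(h, q_j)·q_k and S₊ h = h − 2i·Σ_{j,k=1}^{N+1} (W₊^{−1})_{jk}·(h, q_j)·q_k. Let ξ = W₊^{−1} e_{N+1} ∈ ℂ^{N+1} (where e_{N+1} is the last standard basis vector), f = Σ_{k=1}^{N+1} ξ_k·q_k, and 𝔡 = det(W₊)/det(W). Then for every h ∈ 𝒩, S₊ h = S h − 2i·𝔡 · (Σ_{j=1}^{N+1} ξ_j·(h, q_j)) · f. -/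
open Complex Matrix

/-!
Let `M` be an invertible matrix with blocks `A, B, C, D`, where `A` is invertible, and let
`T = D - C A⁻¹ B` be its Schur complement. The difference between `M⁻¹` and the extension by zero
of `A⁻¹` is the product of the second block column of `M⁻¹`, `T`, and the second block row of
`M⁻¹`. When `M` arises from `A` by adjoining one row and one column, `T` is the scalar
`det M / det A`, so this difference has rank one, and hence so has the difference of the operators
with coefficient matrices `M⁻¹` and `A⁻¹`. For symmetric `M` the last column and the last row of
`M⁻¹` coincide, and both are `ξ`.
-/

section BlockInverse

variable {m n : Type*} [Fintype m] [Fintype n] [DecidableEq m] [DecidableEq n]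

theorem inv_fromBlocks_eq_add_toCols₂_mul_toRows₂ {R : Type*} [CommRing R]
    {A : Matrix m m R} (B : Matrix m n R) (C : Matrix n m R) (D : Matrix n n R)
    (hA : IsUnit A) (hM : IsUnit (fromBlocks A B C D)) :
    (fromBlocks A B C D)⁻¹ = fromBlocks A⁻¹ 0 0 0 +
      (fromBlocks A B C D)⁻¹.toCols₂ * (D - C * A⁻¹ * B) * (fromBlocks A B C D)⁻¹.toRows₂ := by
  let := hA.invertible
  let := hM.invertible
  have hT : IsUnit (D - C * ⅟A * B) := isUnit_fromBlocks_iff_of_invertible₁₁.mp hM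
  let := hT.invertible
  have hInv := invOf_fromBlocks₁₁_eq A B C D
  simp only [invOf_eq_nonsing_inv] at hInv hT
  set T := D - C * A⁻¹ * B
  have hTT : T⁻¹ * T = 1 := nonsing_inv_mul T ((isUnit_iff_isUnit_det T).mp hT)
  have hCols : (fromBlocks A B C D)⁻¹.toCols₂ * T = fromRows (-(A⁻¹ * B)) 1 := by
    have hCol : (fromBlocks A B C D)⁻¹.toCols₂ = fromRows (-(A⁻¹ * B * T⁻¹)) T⁻¹ := by
      rw [hInv, ← fromCols_fromRows_eq_fromBlocks, toCols₂_fromCols]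
    rw [hCol, fromRows_mul, Matrix.neg_mul, Matrix.mul_assoc, hTT, Matrix.mul_one]
  have hRows : (fromBlocks A B C D)⁻¹.toRows₂ = fromCols (-(T⁻¹ * C * A⁻¹)) T⁻¹ := by
    rw [hInv, ← fromRows_fromCols_eq_fromBlocks, toRows₂_fromRows]
  rw [hCols, hRows, fromRows_mul_fromCols, fromBlocks_add, hInv]
  simp [Matrix.mul_assoc]

theorem det_fromBlocks_div_det {K : Type*} [Field K] {A : Matrix m m K} (B : Matrix m n K)
    (C : Matrix n m K) (D : Matrix n n K) (hA : IsUnit A.det) :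
    (fromBlocks A B C D).det / A.det = (D - C * A⁻¹ * B).det := by
  let := A.invertibleOfIsUnitDet hA
  rw [det_fromBlocks₁₁, invOf_eq_nonsing_inv, mul_div_cancel_left₀ _ hA.ne_zero]

theorem inv_eq_fromBlocks_inv_toBlocks₁₁_add_vecMulVec {K : Type*} [Field K] [Unique n]
    {M : Matrix (m ⊕ n) (m ⊕ n) K} (hA : IsUnit M.toBlocks₁₁.det) (hM : IsUnit M.det) :
    M⁻¹ = fromBlocks M.toBlocks₁₁⁻¹ 0 0 0 + (M.det / M.toBlocks₁₁.det) •
      vecMulVec (M⁻¹.col (.inr default)) (M⁻¹.row (.inr default)) := by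
  obtain ⟨A, B, C, D, rfl⟩ : ∃ A B C D, M = fromBlocks A B C D :=
    ⟨_, _, _, _, (fromBlocks_toBlocks M).symm⟩
  rw [toBlocks_fromBlocks₁₁] at hA ⊢
  rw [det_fromBlocks_div_det B C D hA, det_unique]
  nth_rw 1 [inv_fromBlocks_eq_add_toCols₂_mul_toRows₂ B C D ((isUnit_iff_isUnit_det A).mpr hA)
    ((isUnit_iff_isUnit_det _).mpr hM)]
  congr 1
  ext i j
  simp only [mul_apply, toCols₂_apply, toRows₂_apply, Fintype.sum_unique,
    Matrix.smul_apply, smul_eq_mul, vecMulVec_apply, col_apply, row_apply]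
  ring

theorem inv_eq_reindex_fromBlocks_add_vecMulVec {K : Type*} [Field K] {N : ℕ}
    {M : Matrix (Fin (N + 1)) (Fin (N + 1)) K}
    (hA : IsUnit (M.submatrix Fin.castSucc Fin.castSucc).det) (hM : IsUnit M.det) :
    M⁻¹ = reindex finSumFinEquiv finSumFinEquiv
        (fromBlocks (M.submatrix Fin.castSucc Fin.castSucc)⁻¹ 0 0 (0 : Matrix (Fin 1) (Fin 1) K)) +
      (M.det / (M.submatrix Fin.castSucc Fin.castSucc).det) •
        vecMulVec (M⁻¹.col (Fin.last N)) (M⁻¹.row (Fin.last N)) := by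
  let e : Fin N ⊕ Fin 1 ≃ Fin (N + 1) := finSumFinEquiv
  have hCorner : (M.submatrix e e).toBlocks₁₁ = M.submatrix Fin.castSucc Fin.castSucc := rfl
  have hInv := inv_eq_fromBlocks_inv_toBlocks₁₁_add_vecMulVec (M := M.submatrix e e)
    (by rwa [hCorner]) (by rwa [det_submatrix_equiv_self])
  rw [hCorner, det_submatrix_equiv_self, inv_submatrix_equiv] at hInv
  have hLast : Fin.natAdd N (0 : Fin 1) = Fin.last N := rfl
  ext i j
  simpa [vecMulVec_apply, hLast, e] using congrFun₂ hInv (e.symm i) (e.symm j)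

end BlockInverse

section CoefficientMatrix

variable {R V : Type*} [CommSemiring R] [AddCommMonoid V] [Module R V]

theorem sum_sum_vecMulVec_mul_smul {ι : Type*} [Fintype ι] (u v a : ι → R) (q : ι → V) :
    ∑ j, ∑ k, (vecMulVec u v j k * a j) • q k = (∑ j, u j * a j) • ∑ k, v k • q k := by
  simp only [Finset.sum_smul_sum, smul_smul, vecMulVec_apply, mul_right_comm]

theorem sum_sum_reindex_fromBlocks_zero_mul_smul {N : ℕ} (P : Matrix (Fin N) (Fin N) R)
    (a : Fin (N + 1) → R) (q : Fin (N + 1) → V) :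
    ∑ j, ∑ k, (reindex finSumFinEquiv finSumFinEquiv
        (fromBlocks P 0 0 (0 : Matrix (Fin 1) (Fin 1) R)) j k * a j) • q k =
      ∑ j : Fin N, ∑ k : Fin N, (P j k * a j.castSucc) • q k.castSucc := by
  simp [Fin.sum_univ_castSucc]

end CoefficientMatrix

theorem vecMul_eq_mulVec_of_isSymm {R ι : Type*} [CommSemiring R] [Fintype ι] {A : Matrix ι ι R}
    (hA : A.IsSymm) (v : ι → R) : v ᵥ* A = A *ᵥ v := by
  rw [← vecMul_transpose, hA.eq]

theorem stmt18_general {K V : Type*} [Field K] [AddCommGroup V] [Module K V] {N : ℕ}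
    (q : Fin (N + 1) → V) (φ : Fin (N + 1) → V → K) (c : K)
    (W : Matrix (Fin N) (Fin N) K) (Wplus : Matrix (Fin (N + 1)) (Fin (N + 1)) K)
    (hCorner : W = Wplus.submatrix Fin.castSucc Fin.castSucc)
    (hW : IsUnit W.det) (hWplus : IsUnit Wplus.det) {S Splus : V → V}
    (hS : ∀ h, S h = h - c •
      ∑ j : Fin N, ∑ k : Fin N, (W⁻¹ j k * φ j.castSucc h) • q k.castSucc)
    (hSplus : ∀ h, Splus h = h - c • ∑ j, ∑ k, (Wplus⁻¹ j k * φ j h) • q k) (h : V) :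
    Splus h = S h -
      (c * (Wplus.det / W.det) * ∑ j, (Wplus⁻¹ *ᵥ Pi.single (Fin.last N) 1) j * φ j h) •
        ∑ k, (Pi.single (Fin.last N) 1 ᵥ* Wplus⁻¹) k • q k := by
  subst hCorner
  set d := Wplus.det / (Wplus.submatrix Fin.castSucc Fin.castSucc).det
  have hSplit : ∑ j, ∑ k, (Wplus⁻¹ j k * φ j h) • q k =
      ∑ j : Fin N, ∑ k : Fin N,
          ((Wplus.submatrix Fin.castSucc Fin.castSucc)⁻¹ j k * φ j.castSucc h) • q k.castSucc +
        d • (∑ j, Wplus⁻¹.col (Fin.last N) j * φ j h) •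
          ∑ k, Wplus⁻¹.row (Fin.last N) k • q k := by
    nth_rw 1 [inv_eq_reindex_fromBlocks_add_vecMulVec hW hWplus]
    simp only [Matrix.add_apply, Matrix.smul_apply, smul_eq_mul, add_mul, add_smul, mul_assoc,
      mul_smul d, Finset.sum_add_distrib, ← Finset.smul_sum,
      sum_sum_reindex_fromBlocks_zero_mul_smul, sum_sum_vecMulVec_mul_smul, d]
  rw [hSplus, hS, mulVec_single_one, single_one_vecMul, hSplit, smul_add, ← sub_sub, mul_smul,
    mul_smul]

/-- Let `q₁, …, q_{N+1}` be vectors of a complex Hilbert space `𝒩`,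
`Lam` an `(N+1)×(N+1)` Hermitian and symmetric matrix with upper-left `N×N` block its
`castSucc`-submatrix, `Ups` the Gram matrix `Ups_{jk} = (q_j, q_k)` (inner product linear in
the *first* argument, i.e. `⟪q k, q j⟫` in Mathlib's convention), assumed symmetric.
Assume `W = Λ + iΥ` (the `N×N` blocks) and `W₊ = Λ₊ + iΥ₊` are invertible, and let
`S h = h - 2i Σ_{j,k ≤ N} (W⁻¹)_{jk} (h, q_j) q_k`,
`S₊ h = h - 2i Σ_{j,k ≤ N+1} (W₊⁻¹)_{jk} (h, q_j) q_k`,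
`ξ = W₊⁻¹ e_{N+1}`, `f = Σ_k ξ_k q_k` and `𝔡 = det W₊ / det W`.  Then
`S₊ h = S h - 2i 𝔡 (Σ_j ξ_j (h, q_j)) f` for every `h`. -/
theorem stmt18 {𝒩 : Type*} [NormedAddCommGroup 𝒩] [InnerProductSpace ℂ 𝒩]
    [CompleteSpace 𝒩] (N : ℕ) (q : Fin (N + 1) → 𝒩)
    (Lam : Matrix (Fin (N + 1)) (Fin (N + 1)) ℂ)
    (hLamH : Lam.IsHermitian) (hLamS : Lam.transpose = Lam)
    (Ups : Matrix (Fin (N + 1)) (Fin (N + 1)) ℂ)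
    (hUps : ∀ j k, Ups j k = (inner ℂ (q k) (q j) : ℂ))
    (hUpsS : Ups.transpose = Ups)
    (hW : IsUnit (Lam.submatrix Fin.castSucc Fin.castSucc
      + Complex.I • Ups.submatrix Fin.castSucc Fin.castSucc).det)
    (hWplus : IsUnit (Lam + Complex.I • Ups).det)
    (S Splus : 𝒩 →L[ℂ] 𝒩)
    (hS : ∀ h : 𝒩, S h = h - (2 * Complex.I) •
      ∑ j : Fin N, ∑ k : Fin N,
        (((Lam.submatrix Fin.castSucc Fin.castSucc
            + Complex.I • Ups.submatrix Fin.castSucc Fin.castSucc)⁻¹ j k)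
          * (inner ℂ (q j.castSucc) h : ℂ)) • q k.castSucc)
    (hSplus : ∀ h : 𝒩, Splus h = h - (2 * Complex.I) •
      ∑ j : Fin (N + 1), ∑ k : Fin (N + 1),
        (((Lam + Complex.I • Ups)⁻¹ j k) * (inner ℂ (q j) h : ℂ)) • q k) :
    ∀ h : 𝒩, Splus h = S h -
      ((2 * Complex.I) *
        ((Lam + Complex.I • Ups).det /
          (Lam.submatrix Fin.castSucc Fin.castSucc
            + Complex.I • Ups.submatrix Fin.castSucc Fin.castSucc).det) *
        ∑ j : Fin (N + 1),
          ((Lam + Complex.I • Ups)⁻¹.mulVec (Pi.single (Fin.last N) 1)) j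
            * (inner ℂ (q j) h : ℂ)) •
      (∑ k : Fin (N + 1),
        (((Lam + Complex.I • Ups)⁻¹.mulVec (Pi.single (Fin.last N) 1)) k) • q k) := by
  have hSymm : (Lam + Complex.I • Ups)⁻¹.IsSymm := (IsSymm.add hLamS (IsSymm.smul hUpsS _)).inv
  simpa only [vecMul_eq_mulVec_of_isSymm hSymm] using
    stmt18_general q (fun j h ↦ inner ℂ (q j) h) _ _ _ (by rfl) hW hWplus hS hSplus
end
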